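/- arXiv:1904.11890 — 3 statements merged into one kernel-verified Lean document; each statement's English description precedes it below -/
import Mathlib

section
/- Let N be even, S ⊆ {1,…,N} with |S| = N/2, let 0 < q ≤ p ≤ 1, α ≥ 0, β > 0, γ, κ ∈ (0,1), and set λ = α·q/p. If (ε,δ) ∈ E_N^*(γ,κ,p,q), then for every σ ∈ {−1,+1}^N the difference between the diluted and the fully connected Hamiltonian satisfies |H_{N,α,β,ε,δ}(σ) − H̃_{N,λ,β}(σ)| ≤ β·γ·N + 2·λ·κ·N. -/
/-! Up to the prefactors `β / (2Np)` and `α / (2Np)`, the two Hamiltonians differ, inside the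
blocks and across them, by sums `∑ d s`, where `d` is the centred edge variable (`ε - p` or
`δ - q`) and `s = ±1` the product of two spins. Writing `s = 2·1{s = 1} - 1`
or `s = 1 - 2·1{s = -1}` reduces such a sum to one over the aligned (or unaligned) pairs and one
over all pairs of the given type (`sum_sign_pos`, `sum_sign_neg`). The former is controlled by
`Estar` at `σ`, the latter by `Estar` at the all-plus configuration, for which every pair is
aligned. Since there are `N²/2` in-block pairs (`card_block`), the in-block error is at most
`3/4·βγN`; the crude count `N²` suffices for the cross-block error. -/

open Finset Filter

noncomputable section

/-- The spin value of a Boolean: `+1` or `-1`. -/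
def spin (b : Bool) : ℝ := if b then 1 else -1

/-- `i ∼ j` : the sites `i` and `j` belong to the same block. -/
def sim {N : ℕ} (S : Finset (Fin N)) (i j : Fin N) : Prop :=
  (i ∈ S ∧ j ∈ S) ∨ (i ∉ S ∧ j ∉ S)

instance {N : ℕ} (S : Finset (Fin N)) (i j : Fin N) : Decidable (sim S i j) := by
  unfold sim; infer_instance

/-- Magnetization of the first block. -/
def m1 {N : ℕ} (S : Finset (Fin N)) (σ : Fin N → Bool) : ℝ :=
  (2 / N) * ∑ i ∈ S, spin (σ i)

/-- Magnetization of the second block. -/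
def m2 {N : ℕ} (S : Finset (Fin N)) (σ : Fin N → Bool) : ℝ :=
  (2 / N) * ∑ i ∈ Sᶜ, spin (σ i)

/-- `L⁺_b(σ)` : ordered pairs in the same block with aligned spins. -/
def Lbp {N : ℕ} (S : Finset (Fin N)) (σ : Fin N → Bool) : Finset (Fin N × Fin N) :=
  Finset.univ.filter fun ij => sim S ij.1 ij.2 ∧ spin (σ ij.1) * spin (σ ij.2) = 1

/-- `L⁺_nb(σ)` : ordered pairs in different blocks with aligned spins. -/
def Lnbp {N : ℕ} (S : Finset (Fin N)) (σ : Fin N → Bool) : Finset (Fin N × Fin N) :=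
  Finset.univ.filter fun ij => ¬ sim S ij.1 ij.2 ∧ spin (σ ij.1) * spin (σ ij.2) = 1

/-- `L⁻_nb(σ)` : ordered pairs in different blocks with unaligned spins. -/
def Lnbm {N : ℕ} (S : Finset (Fin N)) (σ : Fin N → Bool) : Finset (Fin N × Fin N) :=
  Finset.univ.filter fun ij => ¬ sim S ij.1 ij.2 ∧ spin (σ ij.1) * spin (σ ij.2) = -1

/-- The fully connected block Hamiltonian `H̃_{N,λ,β}`. -/
def Htilde {N : ℕ} (S : Finset (Fin N)) (lam β : ℝ) (σ : Fin N → Bool) : ℝ :=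
  -(β / (2 * N)) * ∑ i, ∑ j, (if sim S i j then spin (σ i) * spin (σ j) else 0)
    - (lam / (2 * N)) * ∑ i, ∑ j, (if ¬ sim S i j then spin (σ i) * spin (σ j) else 0)

/-- The diluted Hamiltonian `H_{N,α,β,ε,δ}`. -/
def Hdil {N : ℕ} (S : Finset (Fin N)) (α β p : ℝ) (ε δ : Fin N → Fin N → ℝ)
    (σ : Fin N → Bool) : ℝ :=
  -(β / (2 * N * p)) * ∑ i, ∑ j, (if sim S i j then ε i j * (spin (σ i) * spin (σ j)) else 0)
    - (α / (2 * N * p)) * ∑ i, ∑ j, (if ¬ sim S i j then δ i j * (spin (σ i) * spin (σ j)) else 0)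

/-- The set `E_N^*(γ, κ, p, q)` of good edge configurations. -/
def Estar {N : ℕ} (S : Finset (Fin N)) (γ κ p q : ℝ) (ε δ : Fin N → Fin N → ℝ) : Prop :=
  ∀ σ : Fin N → Bool,
    |(∑ ij ∈ Lbp S σ, ε ij.1 ij.2) - p * (Lbp S σ).card| ≤ γ * p * (Lbp S σ).card ∧
    (0 ≤ m1 S σ * m2 S σ →
      |(∑ ij ∈ Lnbp S σ, δ ij.1 ij.2) - q * (Lnbp S σ).card| ≤ κ * q * (Lnbp S σ).card) ∧
    (m1 S σ * m2 S σ < 0 →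
      |(∑ ij ∈ Lnbm S σ, δ ij.1 ij.2) - q * (Lnbm S σ).card| ≤ κ * q * (Lnbm S σ).card)

/-- The probability of an edge configuration under independent Bernoulli edges:
within-block edges are present with probability `p`, between-block edges with probability `q`. -/
def graphWeight {N : ℕ} (S : Finset (Fin N)) (p q : ℝ)
    (ed : (Fin N → Fin N → Bool) × (Fin N → Fin N → Bool)) : ℝ :=
  (∏ i, ∏ j, if sim S i j then (if ed.1 i j then p else 1 - p) else 1) *
  (∏ i, ∏ j, if ¬ sim S i j then (if ed.2 i j then q else 1 - q) else 1)

open Classical in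
/-- The probability that the i.i.d. Bernoulli edge variables do not lie in `E_N^*`. -/
def badProb (N : ℕ) (S : Finset (Fin N)) (γ κ p q : ℝ) : ℝ :=
  ∑ ed : (Fin N → Fin N → Bool) × (Fin N → Fin N → Bool),
    if ¬ Estar S γ κ p q (fun i j => if ed.1 i j then 1 else 0)
        (fun i j => if ed.2 i j then 1 else 0) then
      graphWeight S p q ed
    else 0

/-- The filter of `N → ∞` through even `N`. -/
def evenAtTop : Filter ℕ := Filter.atTop ⊓ Filter.principal {N | Even N}

/-- A bounded continuous test function on `ℝ²`. -/
def IsBddCont (f : ℝ × ℝ → ℝ) : Prop := Continuous f ∧ ∃ M, ∀ x, |f x| ≤ M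

/-- Expectation of `g` under the Gibbs measure with Hamiltonian `H`. -/
def gibbsAvg {N : ℕ} (H : (Fin N → Bool) → ℝ) (g : (Fin N → Bool) → ℝ) : ℝ :=
  (∑ σ : Fin N → Bool, Real.exp (-H σ) * g σ) / ∑ σ : Fin N → Bool, Real.exp (-H σ)

open Classical in
/-- The probability of `A ⊆ ℝ²` under the pushforward of the Gibbs measure of `H`
by the group opinion vector `m = (m₁, m₂)`. -/
def gibbsProb {N : ℕ} (H : (Fin N → Bool) → ℝ) (S : Finset (Fin N)) (A : Set (ℝ × ℝ)) : ℝ :=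
  (∑ σ : Fin N → Bool, if (m1 S σ, m2 S σ) ∈ A then Real.exp (-H σ) else 0) /
    ∑ σ : Fin N → Bool, Real.exp (-H σ)

open Classical in
/-- The probability of `A ⊆ ℝ²` under the pushforward of the uniform measure on `{-1,1}^N`
by the group opinion vector `m = (m₁, m₂)`. -/
def unifProb (N : ℕ) (S : Finset (Fin N)) (A : Set (ℝ × ℝ)) : ℝ :=
  (∑ σ : Fin N → Bool, if (m1 S σ, m2 S σ) ∈ A then (1 : ℝ) else 0) / 2 ^ N

/-- `z` is the largest solution of the Curie-Weiss equation `z = tanh (b z)`. -/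
def IsLargestCW (b z : ℝ) : Prop :=
  z = Real.tanh (b * z) ∧ ∀ y : ℝ, y = Real.tanh (b * y) → y ≤ z

/-- Extended-real logarithm, `⊥` for nonpositive arguments. -/
def elog (r : ℝ) : EReal := if r ≤ 0 then ⊥ else ((Real.log r : ℝ) : EReal)

/-- Cramér entropy `I` (with `I = ∞` outside `[-1,1]` and the convention `0 log 0 = 0`). -/
def Ient (x : ℝ) : EReal :=
  if |x| ≤ 1 then
    (((1 / 2) * (1 + x) * Real.log (1 + x) + (1 / 2) * (1 - x) * Real.log (1 - x) : ℝ) : EReal)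
  else ⊤

/-- The rate function `J(x) = ½ I(2x₁) + ½ I(2x₂)`. -/
def Jrate (x : ℝ × ℝ) : EReal :=
  ((1 / 2 : ℝ) : EReal) * Ient (2 * x.1) + ((1 / 2 : ℝ) : EReal) * Ient (2 * x.2)

/-- `F_m(x) = ½ (β x₁² + β x₂² + 2 λ x₁ x₂)`. -/
def Fm (β lam : ℝ) (x : ℝ × ℝ) : ℝ :=
  (1 / 2) * (β * x.1 ^ 2 + β * x.2 ^ 2 + 2 * lam * x.1 * x.2)

/-- The rate function `J_m(x) = sup_y [F_m(y) − J(y)] − [F_m(x) − J(x)]`. -/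
def Jm (β lam : ℝ) (x : ℝ × ℝ) : EReal :=
  (⨆ y : ℝ × ℝ, ((Fm β lam y : ℝ) : EReal) - Jrate y) - (((Fm β lam x : ℝ) : EReal) - Jrate x)

end

section Helpers

variable {ι : Type*} (A : Finset ι) (d s : ι → ℝ)

lemma sum_sign_pos (hs : ∀ x ∈ A, s x = 1 ∨ s x = -1) :
    ∑ x ∈ A, d x * s x = 2 * ∑ x ∈ A.filter (fun x => s x = 1), d x - ∑ x ∈ A, d x := by
  rw [Finset.sum_filter, Finset.mul_sum, ← Finset.sum_sub_distrib]
  refine Finset.sum_congr rfl fun x hx => ?_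
  rcases hs x hx with h | h <;> (norm_num [h]; try ring)

lemma sum_sign_neg (hs : ∀ x ∈ A, s x = 1 ∨ s x = -1) :
    ∑ x ∈ A, d x * s x = ∑ x ∈ A, d x - 2 * ∑ x ∈ A.filter (fun x => s x = -1), d x := by
  rw [Finset.sum_filter, Finset.mul_sum, ← Finset.sum_sub_distrib]
  refine Finset.sum_congr rfl fun x hx => ?_
  rcases hs x hx with h | h <;> (norm_num [h]; try ring)

end Helpers

lemma spin_mul_cases (a b : Bool) : spin a * spin b = 1 ∨ spin a * spin b = -1 := by
  cases a <;> cases b <;> norm_num [spin]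

/-- There are `2·(N/2)² = N²/2` ordered pairs inside the blocks. -/
lemma card_block {N : ℕ} (hN : Even N) (S : Finset (Fin N)) (hS : S.card = N / 2) :
    ((Finset.univ.filter fun x : Fin N × Fin N => sim S x.1 x.2).card : ℝ) = (N : ℝ) ^ 2 / 2 := by
  obtain ⟨k, rfl⟩ := hN
  have hk : S.card = k := by omega
  have hk' : Sᶜ.card = k := by rw [Finset.card_compl, Fintype.card_fin]; omega
  have hset : (Finset.univ.filter fun x : Fin (k + k) × Fin (k + k) => sim S x.1 x.2)
      = S ×ˢ S ∪ Sᶜ ×ˢ Sᶜ := by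
    ext x
    rw [Finset.mem_filter]
    simp [sim]
  rw [hset, Finset.card_union_of_disjoint, Finset.card_product, Finset.card_product, hk, hk']
  · push_cast; ring
  · rw [Finset.disjoint_left]
    intro x h1 h2
    simp only [Finset.mem_product, Finset.mem_compl] at h1 h2
    exact h2.1 h1.1

/-- A double sum over sites with an indicator is a sum over the pairs satisfying it. -/
lemma sum_pairs {N : ℕ} (P : Fin N → Fin N → Prop) [∀ i j, Decidable (P i j)]
    (f : Fin N → Fin N → ℝ) :
    ∑ i, ∑ j, (if P i j then f i j else 0)
      = ∑ x ∈ Finset.univ.filter (fun x : Fin N × Fin N => P x.1 x.2), f x.1 x.2 := by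
  rw [Finset.sum_filter, Fintype.sum_prod_type]

/-- In-block deviation: aligned pairs are counted twice and all `N²/2` pairs once. -/
lemma block_bound {N : ℕ} (hN : Even N) (S : Finset (Fin N)) (hS : S.card = N / 2)
    {p q γ κ : ℝ} (hp : 0 < p) (hγ : 0 < γ) {ε δ : Fin N → Fin N → ℝ}
    (hE : Estar S γ κ p q ε δ) (σ : Fin N → Bool) :
    |∑ x ∈ Finset.univ.filter (fun x : Fin N × Fin N => sim S x.1 x.2),
      (ε x.1 x.2 - p) * (spin (σ x.1) * spin (σ x.2))| ≤ 3 / 2 * (γ * p * (N : ℝ) ^ 2) := by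
  set A := Finset.univ.filter (fun x : Fin N × Fin N => sim S x.1 x.2) with hA
  have hcard : (A.card : ℝ) = (N : ℝ) ^ 2 / 2 := card_block hN S hS
  rw [sum_sign_pos A _ (fun x => spin (σ x.1) * spin (σ x.2))
    (fun x _ => spin_mul_cases _ _)]
  have hf : A.filter (fun x => spin (σ x.1) * spin (σ x.2) = 1) = Lbp S σ := by
    rw [hA, Finset.filter_filter]; rfl
  have hall : Lbp S (fun _ => true) = A := by simp [Lbp, spin, hA]
  have hle : ((Lbp S σ).card : ℝ) ≤ A.card := by
    rw [← hf]; exact_mod_cast Finset.card_filter_le _ _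
  have h1 := (hE σ).1
  have h2 := (hE (fun _ => true)).1
  rw [hall] at h2
  rw [hf]
  simp only [Finset.sum_sub_distrib, Finset.sum_const, nsmul_eq_mul]
  have h3 : γ * p * ((Lbp S σ).card : ℝ) ≤ γ * p * A.card :=
    mul_le_mul_of_nonneg_left hle (by positivity)
  rw [hcard] at *
  rw [abs_le] at *
  constructor <;> linarith [h1.1, h1.2, h2.1, h2.2]

/-- Cross-block deviation; the sign of `m₁ m₂` decides whether `Estar` controls the aligned or the
unaligned pairs. -/
lemma cross_bound {N : ℕ} (S : Finset (Fin N))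
    {p q γ κ : ℝ} (hq : 0 < q) (hκ : 0 < κ) {ε δ : Fin N → Fin N → ℝ}
    (hE : Estar S γ κ p q ε δ) (σ : Fin N → Bool) :
    |∑ x ∈ Finset.univ.filter (fun x : Fin N × Fin N => ¬ sim S x.1 x.2),
      (δ x.1 x.2 - q) * (spin (σ x.1) * spin (σ x.2))| ≤ 3 * (κ * q * (N : ℝ) ^ 2) := by
  set A := Finset.univ.filter (fun x : Fin N × Fin N => ¬ sim S x.1 x.2) with hA
  have hcard : (A.card : ℝ) ≤ (N : ℝ) ^ 2 := by
    have : A.card ≤ N * N := (Finset.card_le_univ A).trans (by simp)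
    rw [pow_two]; exact_mod_cast this
  have hall : Lnbp S (fun _ => true) = A := by simp [Lnbp, spin, hA]
  have hm : 0 ≤ m1 S (fun _ => true) * m2 S (fun _ => true) := by
    simp only [m1, m2, spin, if_true, Finset.sum_const, nsmul_eq_mul]
    positivity
  have h2 := (hE (fun _ => true)).2.1 hm
  rw [hall] at h2
  have h4 : κ * q * (A.card : ℝ) ≤ κ * q * (N : ℝ) ^ 2 :=
    mul_le_mul_of_nonneg_left hcard (by positivity)
  rcases le_or_gt 0 (m1 S σ * m2 S σ) with h | h
  · have h1 := (hE σ).2.1 h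
    have hf : A.filter (fun x => spin (σ x.1) * spin (σ x.2) = 1) = Lnbp S σ := by
      rw [hA, Finset.filter_filter]; rfl
    have hle : ((Lnbp S σ).card : ℝ) ≤ A.card := by
      rw [← hf]; exact_mod_cast Finset.card_filter_le _ _
    have h3 : κ * q * ((Lnbp S σ).card : ℝ) ≤ κ * q * A.card :=
      mul_le_mul_of_nonneg_left hle (by positivity)
    rw [sum_sign_pos A _ (fun x => spin (σ x.1) * spin (σ x.2))
      (fun x _ => spin_mul_cases _ _), hf]
    simp only [Finset.sum_sub_distrib, Finset.sum_const, nsmul_eq_mul]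
    rw [abs_le] at *
    constructor <;> linarith [h1.1, h1.2, h2.1, h2.2]
  · have h1 := (hE σ).2.2 h
    have hf : A.filter (fun x => spin (σ x.1) * spin (σ x.2) = -1) = Lnbm S σ := by
      rw [hA, Finset.filter_filter]; rfl
    have hle : ((Lnbm S σ).card : ℝ) ≤ A.card := by
      rw [← hf]; exact_mod_cast Finset.card_filter_le _ _
    have h3 : κ * q * ((Lnbm S σ).card : ℝ) ≤ κ * q * A.card :=
      mul_le_mul_of_nonneg_left hle (by positivity)
    rw [sum_sign_neg A _ (fun x => spin (σ x.1) * spin (σ x.2))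
      (fun x _ => spin_mul_cases _ _), hf]
    simp only [Finset.sum_sub_distrib, Finset.sum_const, nsmul_eq_mul]
    rw [abs_le] at *
    constructor <;> linarith [h1.1, h1.2, h2.1, h2.2]

/-- on `E_N^*(γ,κ,p,q)` the diluted Hamiltonian is uniformly close to the
fully connected Hamiltonian with cross coupling `λ = α q / p`. -/
theorem hamiltonian_difference_bound (N : ℕ) (hN : Even N)
    (S : Finset (Fin N)) (hS : S.card = N / 2)
    (p q α β γ κ : ℝ) (hq0 : 0 < q) (hqp : q ≤ p) (hp1 : p ≤ 1)
    (hα : 0 ≤ α) (hβ : 0 < β) (hγ0 : 0 < γ) (hγ1 : γ < 1) (hκ0 : 0 < κ) (hκ1 : κ < 1)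
    (ε δ : Fin N → Fin N → ℝ)
    (hε : ∀ i j, ε i j = 0 ∨ ε i j = 1) (hδ : ∀ i j, δ i j = 0 ∨ δ i j = 1)
    (hE : Estar S γ κ p q ε δ) (σ : Fin N → Bool) :
    |Hdil S α β p ε δ σ - Htilde S (α * q / p) β σ| ≤
      β * γ * N + 2 * (α * q / p) * κ * N := by
  have hp : 0 < p := hq0.trans_le hqp
  rcases Nat.eq_zero_or_pos N with rfl | hN0
  · simp [Hdil, Htilde]
  have hNr : (0 : ℝ) < N := by exact_mod_cast hN0
  have hb := block_bound hN S hS hp hγ0 hE σ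
  have hc := cross_bound S hq0 hκ0 hE σ
  simp only [Hdil, Htilde]
  rw [sum_pairs (fun i j => sim S i j) (fun i j => ε i j * (spin (σ i) * spin (σ j))),
    sum_pairs (fun i j => ¬ sim S i j) (fun i j => δ i j * (spin (σ i) * spin (σ j))),
    sum_pairs (fun i j => sim S i j) (fun i j => spin (σ i) * spin (σ j)),
    sum_pairs (fun i j => ¬ sim S i j) (fun i j => spin (σ i) * spin (σ j))]
  simp only [sub_mul, Finset.sum_sub_distrib, ← Finset.mul_sum] at hb hc
  set X := ∑ x ∈ Finset.univ.filter (fun x : Fin N × Fin N => sim S x.1 x.2),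
    ε x.1 x.2 * (spin (σ x.1) * spin (σ x.2))
  set X' := ∑ x ∈ Finset.univ.filter (fun x : Fin N × Fin N => sim S x.1 x.2),
    spin (σ x.1) * spin (σ x.2)
  set Y := ∑ x ∈ Finset.univ.filter (fun x : Fin N × Fin N => ¬ sim S x.1 x.2),
    δ x.1 x.2 * (spin (σ x.1) * spin (σ x.2))
  set Y' := ∑ x ∈ Finset.univ.filter (fun x : Fin N × Fin N => ¬ sim S x.1 x.2),
    spin (σ x.1) * spin (σ x.2)
  have hsplit : -(β / (2 * N * p)) * X - α / (2 * N * p) * Y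
      - (-(β / (2 * N)) * X' - α * q / p / (2 * N) * Y')
      = -(β / (2 * N * p) * (X - p * X') + α / (2 * N * p) * (Y - q * Y')) := by
    field_simp; ring
  have hβ' : 0 ≤ β / (2 * N * p) := by positivity
  have hα' : 0 ≤ α / (2 * N * p) := by positivity
  rw [hsplit, abs_neg]
  calc |β / (2 * N * p) * (X - p * X') + α / (2 * N * p) * (Y - q * Y')|
      ≤ β / (2 * N * p) * |X - p * X'| + α / (2 * N * p) * |Y - q * Y'| := by
        refine (abs_add_le _ _).trans_eq ?_
        rw [abs_mul, abs_mul, abs_of_nonneg hβ', abs_of_nonneg hα']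
    _ ≤ β / (2 * N * p) * (3 / 2 * (γ * p * (N : ℝ) ^ 2))
        + α / (2 * N * p) * (3 * (κ * q * (N : ℝ) ^ 2)) := by gcongr
    _ = 3 / 4 * (β * γ * N) + 3 / 2 * ((α * q / p) * κ * N) := by
        field_simp; ring
    _ ≤ β * γ * N + 2 * (α * q / p) * κ * N := by
        have h1 : 0 ≤ β * γ * N := by positivity
        have h2 : 0 ≤ (α * q / p) * κ * N := by positivity
        linarith
end

section
/- Fix β > 0 and λ with |λ| < β, and for even N let ρ̃_{N,λ,β} be the distribution of the group opinion vector m under the Gibbs measure μ̃_{N,λ,β}. Then as N → ∞ (through even N): (i) if β + |λ| ≤ 2, ρ̃_{N,λ,β} converges weakly to the Dirac measure at (0,0); (ii) if β + |λ| > 2 and λ = 0, ρ̃_{N,λ,β} converges weakly to (1/4)·Σ_{s₁,s₂ ∈ {−1,+1}} δ_{(s₁·z*(β/2), s₂·z*(β/2))}; (iii) if β + |λ| > 2 and λ > 0, ρ̃_{N,λ,β} converges weakly to (1/2)·(δ_{(z*((λ+β)/2), z*((λ+β)/2))} + δ_{(−z*((λ+β)/2), −z*((λ+β)/2))}); (iv)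 if β + |λ| > 2 and λ < 0, ρ̃_{N,λ,β} converges weakly to (1/2)·(δ_{(z*((β−λ)/2), −z*((β−λ)/2))} + δ_{(−z*((β−λ)/2), z*((β−λ)/2))}). -/
/-!
Write `n = N / 2`, `b = β / 2`, `c = λ / 2`. Then `-H̃ = n · Q(m)` with the positive definite form
`Q(x, y) = (b / 2)(x² + y²) + c x y` (`neg_Htilde`), and `∑_σ exp (n θ · m(σ))` factorizes over the
sites. Put `Φ(v) = log cosh ∂₁Q(v) + log cosh ∂₂Q(v) - Q(v)`.

* Since `Q` lies above its tangent at any `p`, the partition function is at least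
  `exp (n (2 log 2 + Φ(p)))` (`partition_lower`).
* On the level set `m = v`, tilting by `θ = ∇Q(v)` shows that the total weight is at most
  `exp (n (2 log 2 + Φ(v)))` (`level_upper`).

As `m` takes only polynomially many values in the compact square `[-1, 1]²`, the Gibbs measure
concentrates on the maximizers of `Φ` (`concentration`); no entropy function is needed.

To find the maximizers, take `c ≥ 0` and `B = b + c`; reflecting one coordinate handles `c < 0`.
`Φ` equals a sum of two one-dimensional Curie–Weiss functions
`φ_B(t) = log cosh (B t) - B t² / 2` minus a nonnegative multiple of `c (x - y)²` (`Phi_eq`,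
`quad_defect`), and `φ_B` is maximal exactly at `|t| = z` by the sign of
`φ_B' = B (tanh (B t) - t)`, which follows from concavity of `tanh` on `[0, ∞)`.

The weights of the several maximizers are equal by spin-flip symmetry: the test function is
replaced by its average over the flips, which takes one and the same value at all maximizers.
-/

open Finset Filter

/-! ### One-dimensional Curie–Weiss analysis -/

theorem hasDerivAt_tanh_aux (x : ℝ) : HasDerivAt Real.tanh (1 / Real.cosh x ^ 2) x := by
  have h : Real.tanh = fun y => Real.sinh y / Real.cosh y := by
    funext y; exact Real.tanh_eq_sinh_div_cosh y
  rw [h]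
  have := (Real.hasDerivAt_sinh x).div (Real.hasDerivAt_cosh x) (Real.cosh_pos x).ne'
  refine this.congr_deriv ?_
  congr 1
  have := Real.cosh_sq x
  nlinarith

theorem continuous_tanh_aux : Continuous Real.tanh :=
  continuous_iff_continuousAt.2 fun x => (hasDerivAt_tanh_aux x).continuousAt

theorem tanh_lt_self {u : ℝ} (hu : 0 < u) : Real.tanh u < u := by
  have hd : ∀ x, HasDerivAt (fun y => Real.tanh y - y) (1 / Real.cosh x ^ 2 - 1) x := fun x =>
    (hasDerivAt_tanh_aux x).sub (hasDerivAt_id x)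
  have h : StrictAntiOn (fun y => Real.tanh y - y) (Set.Ici 0) := by
    apply strictAntiOn_of_deriv_neg (convex_Ici 0)
    · exact (continuous_tanh_aux.sub continuous_id).continuousOn
    · intro x hx
      rw [interior_Ici, Set.mem_Ioi] at hx
      rw [(hd x).deriv, sub_neg, div_lt_one (by have := Real.cosh_pos x; positivity)]
      have := Real.one_lt_cosh.2 hx.ne'
      nlinarith
  have := h (Set.mem_Ici.2 le_rfl) (Set.mem_Ici.2 hu.le) hu
  simp at this
  linarith

theorem strictConcaveOn_tanh : StrictConcaveOn ℝ (Set.Ici 0) Real.tanh := by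
  apply StrictAntiOn.strictConcaveOn_of_deriv (convex_Ici 0) continuous_tanh_aux.continuousOn
  intro x hx y hy hxy
  rw [interior_Ici, Set.mem_Ioi] at hx hy
  rw [(hasDerivAt_tanh_aux x).deriv, (hasDerivAt_tanh_aux y).deriv]
  have h1 : Real.cosh x < Real.cosh y := by
    rw [Real.cosh_lt_cosh, abs_of_pos hx, abs_of_pos hy]; exact hxy
  have := Real.cosh_pos x
  gcongr

/-- `z ≥ 0` separates the signs of `tanh (B t) - t` on the positive half-line. For `B ≤ 1` this
holds with `z = 0`, for `B > 1` with the largest solution of the Curie-Weiss equation. -/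
def IsCWPoint (B z : ℝ) : Prop :=
  0 ≤ z ∧ (∀ t, z < t → Real.tanh (B * t) < t) ∧ ∀ t, 0 < t → t < z → t < Real.tanh (B * t)

theorem isCWPoint_zero {B : ℝ} (hB0 : 0 < B) (hB : B ≤ 1) : IsCWPoint B 0 := by
  refine ⟨le_rfl, fun t ht => ?_, fun t h1 h2 => absurd h1 h2.not_gt⟩
  have := tanh_lt_self (mul_pos hB0 ht)
  nlinarith

theorem isCWPoint_of_isLargestCW {B z : ℝ} (hB : 1 < B) (hz : IsLargestCW B z) :
    IsCWPoint B z := by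
  obtain ⟨hz1, hz2⟩ := hz
  have hz0 : 0 ≤ z := hz2 0 (by simp)
  have hcont : Continuous fun t => t - Real.tanh (B * t) :=
    continuous_id.sub (continuous_tanh_aux.comp (continuous_const.mul continuous_id))
  -- Beyond `z` there is no further zero, and `tanh < 1` forces the sign at `t + 1`.
  have habove : ∀ t, z < t → Real.tanh (B * t) < t := by
    intro t ht
    by_contra! hcon
    have := intermediate_value_Icc (show t ≤ t + 1 by linarith) hcont.continuousOn
    obtain ⟨y, hy, hy0⟩ := this (show (0 : ℝ) ∈ _ from
      ⟨by linarith, by have := Real.tanh_lt_one (B * (t + 1)); linarith⟩)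
    have := hz2 y (by simp only at hy0; linarith)
    linarith [hy.1]
  refine ⟨hz0, habove, fun t ht0 htz => ?_⟩
  have hzpos : 0 < z := ht0.trans htz
  have hBz : 0 < B * z := by positivity
  have ha : 0 < 1 - t / z := by rw [sub_pos, div_lt_one hzpos]; exact htz
  have hlt := strictConcaveOn_tanh.2 (Set.mem_Ici.2 le_rfl) (Set.mem_Ici.2 hBz.le) hBz.ne
    ha (div_pos ht0 hzpos) (by ring)
  have e : t / z * (B * z) = B * t := by field_simp
  simp only [smul_eq_mul, Real.tanh_zero, mul_zero, zero_add, ← hz1, e] at hlt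
  rwa [div_mul_cancel₀ _ hzpos.ne'] at hlt

/-- The one-dimensional Curie–Weiss free energy `φ_B(t) = log cosh (B t) - B t² / 2`. -/
noncomputable def cwPhi (B t : ℝ) : ℝ := Real.log (Real.cosh (B * t)) - B * t ^ 2 / 2

theorem hasDerivAt_cwPhi (B t : ℝ) :
    HasDerivAt (cwPhi B) (B * (Real.tanh (B * t) - t)) t := by
  have h1 : HasDerivAt (fun t => B * t) B t := by
    simpa using (hasDerivAt_id t).const_mul B
  have h2 := ((h1.cosh).log (Real.cosh_pos _).ne').sub
    (((hasDerivAt_pow 2 t).const_mul B).div_const 2)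
  refine h2.congr_deriv ?_
  rw [Real.tanh_eq_sinh_div_cosh]
  push_cast
  ring

theorem cwPhi_abs (B t : ℝ) : cwPhi B |t| = cwPhi B t := by
  rcases abs_choice t with h | h <;> rw [h]
  simp [cwPhi]

theorem cwPhi_lt {B z t : ℝ} (hB : 0 < B) (hz : IsCWPoint B z) (ht : |t| ≠ z) :
    cwPhi B t < cwPhi B z := by
  rw [← cwPhi_abs B t]
  have h0 := abs_nonneg t
  generalize |t| = s at *
  obtain ⟨hz0, hgt, hlt⟩ := hz
  have hc : Continuous (cwPhi B) :=
    continuous_iff_continuousAt.2 fun x => (hasDerivAt_cwPhi B x).continuousAt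
  rcases lt_or_gt_of_ne ht with h | h
  · refine strictMonoOn_of_deriv_pos (convex_Icc 0 z) hc.continuousOn (fun x hx => ?_)
      ⟨h0, h.le⟩ ⟨hz0, le_rfl⟩ h
    rw [interior_Icc] at hx
    rw [(hasDerivAt_cwPhi B x).deriv]
    exact mul_pos hB (sub_pos.2 (hlt x hx.1 hx.2))
  · refine strictAntiOn_of_deriv_neg (convex_Ici z) hc.continuousOn (fun x hx => ?_)
      (Set.mem_Ici.2 le_rfl) (Set.mem_Ici.2 h.le) h
    rw [interior_Ici] at hx
    rw [(hasDerivAt_cwPhi B x).deriv]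
    exact mul_neg_of_pos_of_neg hB (sub_neg.2 (hgt x hx))

theorem cwPhi_le {B z : ℝ} (hB : 0 < B) (hz : IsCWPoint B z) (t : ℝ) :
    cwPhi B t ≤ cwPhi B z := by
  by_cases h : |t| = z
  · rw [← h, cwPhi_abs]
  · exact (cwPhi_lt hB hz h).le

/-! ### The two-dimensional rate function -/

/-- The quadratic form with `-H̃ = (N / 2) · Q(m₁, m₂)` for `b = β / 2`, `c = λ / 2`. -/
noncomputable def quadQ (b c : ℝ) (v : ℝ × ℝ) : ℝ := b / 2 * (v.1 ^ 2 + v.2 ^ 2) + c * (v.1 * v.2)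

/-- `Φ(v) = log cosh (∂₁Q(v)) + log cosh (∂₂Q(v)) - Q(v)`, the exponential rate (up to the constant
`2 log 2`) of both the partition function and the level sets of `m`. -/
noncomputable def Phi (b c : ℝ) (v : ℝ × ℝ) : ℝ :=
  Real.log (Real.cosh (b * v.1 + c * v.2)) + Real.log (Real.cosh (c * v.1 + b * v.2))
    - quadQ b c v

theorem continuous_Phi (b c : ℝ) : Continuous (Phi b c) := by
  unfold Phi quadQ
  have h : ∀ g : ℝ × ℝ → ℝ, Continuous g → Continuous fun v => Real.log (Real.cosh (g v)) :=
    fun g hg => (Real.continuous_cosh.comp hg).log fun v => (Real.cosh_pos _).ne'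
  exact ((h _ (by fun_prop)).add (h _ (by fun_prop))).sub (by fun_prop)

theorem quadQ_nonneg {b c : ℝ} (h : |c| < b) (v : ℝ × ℝ) : 0 ≤ quadQ b c v := by
  obtain ⟨h1, h2⟩ := abs_lt.1 h
  have : quadQ b c v = (b + c) * (v.1 + v.2) ^ 2 / 4 + (b - c) * (v.1 - v.2) ^ 2 / 4 := by
    unfold quadQ; ring
  rw [this]
  have : 0 ≤ b + c := by linarith
  have : 0 ≤ b - c := by linarith
  positivity

theorem quadQ_sub (b c : ℝ) (v p : ℝ × ℝ) :
    quadQ b c (v - p) = quadQ b c v + quadQ b c p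
      - ((b * p.1 + c * p.2) * v.1 + (c * p.1 + b * p.2) * v.2) := by
  unfold quadQ; simp only [Prod.fst_sub, Prod.snd_sub]; ring

theorem quadQ_grad (b c : ℝ) (v : ℝ × ℝ) :
    (b * v.1 + c * v.2) * v.1 + (c * v.1 + b * v.2) * v.2 = 2 * quadQ b c v := by
  unfold quadQ; ring

/-- `Φ` is a sum of two one-dimensional free energies at the rescaled gradient of `Q`, minus a
quadratic defect, computed in `quad_defect` for `B = b + c`. -/
theorem Phi_eq {b c B : ℝ} (hB : B ≠ 0) (v : ℝ × ℝ) :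
    Phi b c v = cwPhi B ((b * v.1 + c * v.2) / B) + cwPhi B ((c * v.1 + b * v.2) / B)
      - (quadQ b c v - ((b * v.1 + c * v.2) ^ 2 + (c * v.1 + b * v.2) ^ 2) / (2 * B)) := by
  unfold Phi cwPhi
  rw [mul_div_cancel₀ _ hB, mul_div_cancel₀ _ hB]
  field_simp
  ring

/-- `c ↦ -c` amounts to reflecting the second coordinate, which reduces `c < 0` to `c > 0`. -/
theorem Phi_flip (b c x y : ℝ) : Phi b c (x, y) = Phi b (-c) (x, -y) := by
  unfold Phi quadQ
  rw [← Real.cosh_neg (c * (x, y).1 + b * (x, y).2)]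
  have e1 : b * (x, y).1 + c * (x, y).2 = b * (x, -y).1 + -c * (x, -y).2 := by
    dsimp only; ring
  have e2 : -(c * (x, y).1 + b * (x, y).2) = -c * (x, -y).1 + b * (x, -y).2 := by
    dsimp only; ring
  rw [e1, e2]
  dsimp only
  ring

theorem quad_defect {b c : ℝ} (hB : b + c ≠ 0) (v : ℝ × ℝ) :
    quadQ b c v - ((b * v.1 + c * v.2) ^ 2 + (c * v.1 + b * v.2) ^ 2) / (2 * (b + c))
      = (b - c) * c * (v.1 - v.2) ^ 2 / (2 * (b + c)) := by
  unfold quadQ; field_simp; ring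

theorem Phi_le {b c z : ℝ} (hc : 0 ≤ c) (hcb : c < b) (hz : IsCWPoint (b + c) z) (v : ℝ × ℝ) :
    Phi b c v ≤ 2 * cwPhi (b + c) z := by
  have hB : 0 < b + c := by linarith
  rw [Phi_eq hB.ne', quad_defect hB.ne']
  have h0 : 0 ≤ (b - c) * c * (v.1 - v.2) ^ 2 / (2 * (b + c)) := by
    have : 0 ≤ b - c := by linarith
    positivity
  linarith [cwPhi_le hB hz ((b * v.1 + c * v.2) / (b + c)),
    cwPhi_le hB hz ((c * v.1 + b * v.2) / (b + c))]

theorem Phi_eq_max {b c z : ℝ} (hc : 0 ≤ c) (hcb : c < b) (hz : IsCWPoint (b + c) z)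
    {v : ℝ × ℝ} (hv : Phi b c v = 2 * cwPhi (b + c) z) :
    |v.1| = z ∧ |v.2| = z ∧ (0 < c → v.1 = v.2) := by
  have hB : 0 < b + c := by linarith
  rw [Phi_eq hB.ne', quad_defect hB.ne'] at hv
  have hbc : 0 < b - c := by linarith
  have h0 : 0 ≤ (b - c) * c * (v.1 - v.2) ^ 2 / (2 * (b + c)) := by positivity
  have k1 := cwPhi_le hB hz ((b * v.1 + c * v.2) / (b + c))
  have k2 := cwPhi_le hB hz ((c * v.1 + b * v.2) / (b + c))
  have a1 : |(b * v.1 + c * v.2) / (b + c)| = z := by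
    by_contra h
    linarith [cwPhi_lt hB hz h]
  have a2 : |(c * v.1 + b * v.2) / (b + c)| = z := by
    by_contra h
    linarith [cwPhi_lt hB hz h]
  rcases hc.eq_or_lt with rfl | hc
  · have hb : b ≠ 0 := by linarith
    simp only [add_zero, zero_mul, zero_add, mul_div_cancel_left₀ _ hb] at a1 a2
    exact ⟨a1, a2, fun h => absurd h (lt_irrefl _)⟩
  · have hd : (b - c) * c * (v.1 - v.2) ^ 2 / (2 * (b + c)) = 0 := by linarith
    have hxy : v.1 = v.2 := by
      rw [div_eq_zero_iff, mul_eq_zero] at hd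
      rcases hd with (hd | hd) | hd
      · exact absurd hd (by positivity)
      · exact sub_eq_zero.1 (pow_eq_zero_iff two_ne_zero |>.1 hd)
      · exact absurd hd (by positivity)
    rw [← hxy, ← add_mul, mul_div_cancel_left₀ _ hB.ne'] at a1
    exact ⟨a1, hxy ▸ a1, fun _ => hxy⟩

theorem Phi_at_max (b c z : ℝ) : Phi b c (z, z) = 2 * cwPhi (b + c) z := by
  unfold Phi quadQ cwPhi
  dsimp only
  rw [show b * z + c * z = (b + c) * z by ring, show c * z + b * z = (b + c) * z by ring]
  ring

/-! ### Gibbs sums -/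

theorem sum_exp_linear {N : ℕ} (S : Finset (Fin N)) (a b : ℝ) :
    ∑ σ : Fin N → Bool, Real.exp (a * ∑ i ∈ S, spin (σ i) + b * ∑ i ∈ Sᶜ, spin (σ i))
      = (2 * Real.cosh a) ^ S.card * (2 * Real.cosh b) ^ Sᶜ.card := by
  have h1 : ∀ σ : Fin N → Bool,
      Real.exp (a * ∑ i ∈ S, spin (σ i) + b * ∑ i ∈ Sᶜ, spin (σ i))
        = ∏ i, Real.exp ((if i ∈ S then a else b) * spin (σ i)) := by
    intro σ
    rw [← Real.exp_sum, ← Finset.sum_add_sum_compl S, Finset.mul_sum, Finset.mul_sum]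
    congr 2
    · exact Finset.sum_congr rfl fun i hi => by rw [if_pos hi]
    · exact Finset.sum_congr rfl fun i hi => by rw [if_neg (Finset.mem_compl.1 hi)]
  have h2 : ∀ i : Fin N, ∑ s : Bool, Real.exp ((if i ∈ S then a else b) * spin s)
      = if i ∈ S then 2 * Real.cosh a else 2 * Real.cosh b := by
    intro i
    rw [Fintype.sum_bool]
    split_ifs <;> simp [spin, Real.cosh_eq] <;> ring
  simp_rw [h1]
  have h3 := Fintype.prod_sum (fun (i : Fin N) (s : Bool) =>
    Real.exp ((if i ∈ S then a else b) * spin s))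
  rw [← h3, Finset.prod_congr rfl fun i _ => h2 i, ← Finset.prod_mul_prod_compl S]
  congr 1
  · rw [Finset.prod_congr rfl fun i hi => if_pos hi, Finset.prod_const]
  · rw [Finset.prod_congr rfl fun i hi => if_neg (Finset.mem_compl.1 hi), Finset.prod_const]

/-- The group opinion vector `m = (m₁, m₂)`. -/
noncomputable def mvec {N : ℕ} (S : Finset (Fin N)) (σ : Fin N → Bool) : ℝ × ℝ := (m1 S σ, m2 S σ)

theorem neg_Htilde {N : ℕ} (S : Finset (Fin N)) (lam β : ℝ) (σ : Fin N → Bool) (hN : N ≠ 0) :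
    -Htilde S lam β σ = N / 2 * quadQ (β / 2) (lam / 2) (mvec S σ) := by
  have hN' : (N : ℝ) ≠ 0 := Nat.cast_ne_zero.2 hN
  have key : ∀ i, ∑ j, (if sim S i j then spin (σ i) * spin (σ j) else 0)
      = if i ∈ S then spin (σ i) * ∑ j ∈ S, spin (σ j)
        else spin (σ i) * ∑ j ∈ Sᶜ, spin (σ j) := by
    intro i
    rw [← Finset.sum_add_sum_compl S]
    split_ifs with hi
    · rw [Finset.mul_sum, Finset.sum_congr rfl fun j hj =>
        if_pos (show sim S i j from Or.inl ⟨hi, hj⟩),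
        Finset.sum_eq_zero (s := Sᶜ), add_zero]
      intro j hj
      rw [Finset.mem_compl] at hj
      exact if_neg (by unfold sim; tauto)
    · rw [Finset.mul_sum, Finset.sum_congr (s₁ := Sᶜ) rfl fun j hj =>
        if_pos (show sim S i j from Or.inr ⟨hi, Finset.mem_compl.1 hj⟩), Finset.sum_eq_zero (s := S), zero_add]
      intro j hj
      exact if_neg (by unfold sim; tauto)
  have key2 : ∀ i, ∑ j, (if ¬ sim S i j then spin (σ i) * spin (σ j) else 0)
      = if i ∈ S then spin (σ i) * ∑ j ∈ Sᶜ, spin (σ j)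
        else spin (σ i) * ∑ j ∈ S, spin (σ j) := by
    intro i
    have h1 : ∑ j, (if ¬ sim S i j then spin (σ i) * spin (σ j) else 0)
        = spin (σ i) * (∑ j ∈ S, spin (σ j) + ∑ j ∈ Sᶜ, spin (σ j))
          - ∑ j, (if sim S i j then spin (σ i) * spin (σ j) else 0) := by
      rw [Finset.sum_add_sum_compl, Finset.mul_sum, ← Finset.sum_sub_distrib]
      exact Finset.sum_congr rfl fun j _ => by split_ifs <;> simp_all
    rw [h1, key]
    split_ifs <;> ring
  have agg : ∀ A B : ℝ, ∑ i, (if i ∈ S then spin (σ i) * A else spin (σ i) * B)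
      = (∑ i ∈ S, spin (σ i)) * A + (∑ i ∈ Sᶜ, spin (σ i)) * B := by
    intro A B
    rw [← Finset.sum_add_sum_compl S, Finset.sum_mul, Finset.sum_mul]
    congr 1
    · exact Finset.sum_congr rfl fun i hi => if_pos hi
    · exact Finset.sum_congr rfl fun i hi => if_neg (Finset.mem_compl.1 hi)
  unfold Htilde
  simp_rw [key, key2]
  rw [agg, agg]
  unfold quadQ mvec m1 m2
  dsimp only
  field_simp
  ring

theorem spin_eq (s : Bool) : spin s = 2 * (if s then 1 else 0) - 1 := by
  cases s <;> norm_num [spin]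

theorem sum_spin {N : ℕ} (T : Finset (Fin N)) (σ : Fin N → Bool) :
    ∑ i ∈ T, spin (σ i) = 2 * ((T.filter fun i => σ i = true).card : ℝ) - T.card := by
  simp_rw [spin_eq]
  rw [Finset.sum_sub_distrib, ← Finset.mul_sum, Finset.sum_boole]
  simp

theorem card_compl_half {N : ℕ} (hN : Even N) {S : Finset (Fin N)} (hS : S.card = N / 2) :
    Sᶜ.card = N / 2 := by
  obtain ⟨k, rfl⟩ := hN
  rw [Finset.card_compl, Fintype.card_fin, hS]
  omega

/-- Each block magnetization takes at most `N / 2 + 1 ≤ N + 1` values. -/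
theorem card_image_mvec_le {N : ℕ} (hN : Even N) {S : Finset (Fin N)} (hS : S.card = N / 2) :
    ((Finset.univ : Finset (Fin N → Bool)).image (mvec S)).card ≤ (N + 1) ^ 2 := by
  have hT := card_compl_half hN hS
  let g : ℕ × ℕ → ℝ × ℝ := fun k =>
    ((2 / N) * (2 * (k.1 : ℝ) - (N / 2 : ℕ)), (2 / N) * (2 * (k.2 : ℝ) - (N / 2 : ℕ)))
  have hsub : (Finset.univ : Finset (Fin N → Bool)).image (mvec S)
      ⊆ ((Finset.range (N + 1)) ×ˢ (Finset.range (N + 1))).image g := by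
    intro v hv
    obtain ⟨σ, -, rfl⟩ := Finset.mem_image.1 hv
    refine Finset.mem_image.2 ⟨((S.filter fun i => σ i = true).card,
      (Sᶜ.filter fun i => σ i = true).card), ?_, ?_⟩
    · have hle : ∀ T : Finset (Fin N), T.card < N + 1 := fun T =>
        Nat.lt_succ_of_le (by simpa using Finset.card_le_univ T)
      exact Finset.mk_mem_product (Finset.mem_range.2 (hle _)) (Finset.mem_range.2 (hle _))
    · simp only [g, mvec, m1, m2, sum_spin, hS, hT]
  calc _ ≤ _ := Finset.card_le_card hsub
    _ ≤ _ := Finset.card_image_le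
    _ = _ := by rw [Finset.card_product, Finset.card_range, sq]

theorem abs_sum_spin_le {N : ℕ} (T : Finset (Fin N)) (σ : Fin N → Bool) :
    |∑ i ∈ T, spin (σ i)| ≤ T.card := by
  refine (Finset.abs_sum_le_sum_abs _ _).trans (le_of_eq ?_)
  rw [Finset.sum_congr rfl fun i _ => (show |spin (σ i)| = 1 by unfold spin; split_ifs <;> simp)]
  simp

theorem half_cast {N : ℕ} (hN : Even N) : ((N / 2 : ℕ) : ℝ) = N / 2 := by
  obtain ⟨k, rfl⟩ := hN
  rw [← two_mul, Nat.mul_div_cancel_left _ two_pos]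
  push_cast; ring

theorem mvec_mem {N : ℕ} (hN : Even N) (hN0 : N ≠ 0) {S : Finset (Fin N)}
    (hS : S.card = N / 2) (σ : Fin N → Bool) :
    mvec S σ ∈ Set.Icc (-1 : ℝ) 1 ×ˢ Set.Icc (-1 : ℝ) 1 := by
  have hNpos : (0 : ℝ) < N := Nat.cast_pos.2 (Nat.pos_of_ne_zero hN0)
  have h : ∀ T : Finset (Fin N), T.card = N / 2 →
      (2 / N : ℝ) * ∑ i ∈ T, spin (σ i) ∈ Set.Icc (-1 : ℝ) 1 := by
    intro T hT
    rw [Set.mem_Icc, ← abs_le, abs_mul, abs_of_pos (by positivity)]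
    calc _ ≤ (2 / N : ℝ) * (N / 2) := by
          gcongr
          rw [← half_cast hN, ← hT]
          exact abs_sum_spin_le T σ
      _ = 1 := by field_simp
  exact ⟨h S hS, h Sᶜ (card_compl_half hN hS)⟩

theorem sum_exp_mvec {N : ℕ} (hN : Even N) (hN0 : N ≠ 0) {S : Finset (Fin N)}
    (hS : S.card = N / 2) (a b : ℝ) :
    ∑ σ : Fin N → Bool, Real.exp (N / 2 * (a * (mvec S σ).1 + b * (mvec S σ).2))
      = Real.exp (N / 2 * (2 * Real.log 2 + Real.log (Real.cosh a) + Real.log (Real.cosh b))) := by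
  have hN' : (N : ℝ) ≠ 0 := Nat.cast_ne_zero.2 hN0
  have h1 : ∀ σ : Fin N → Bool, (N : ℝ) / 2 * (a * (mvec S σ).1 + b * (mvec S σ).2)
      = a * ∑ i ∈ S, spin (σ i) + b * ∑ i ∈ Sᶜ, spin (σ i) := by
    intro σ
    simp only [mvec, m1, m2]
    field_simp
  have h2 : ∀ x : ℝ, (2 * Real.cosh x) ^ (N / 2)
      = Real.exp (N / 2 * (Real.log 2 + Real.log (Real.cosh x))) := by
    intro x
    have := Real.cosh_pos x
    rw [← Real.log_mul two_ne_zero this.ne', ← half_cast hN, Real.exp_nat_mul,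
      Real.exp_log (by positivity)]
  simp_rw [h1]
  rw [sum_exp_linear, hS, card_compl_half hN hS, h2, h2, ← Real.exp_add]
  congr 1
  ring

/-- Convexity of `Q` bounds it below by its tangent at `p`, and the tilted sum factorizes. -/
theorem partition_lower {b c : ℝ} (h : |c| < b) {N : ℕ} (hN : Even N) (hN0 : N ≠ 0)
    {S : Finset (Fin N)} (hS : S.card = N / 2) (p : ℝ × ℝ) :
    Real.exp (N / 2 * (2 * Real.log 2 + Phi b c p))
      ≤ ∑ σ : Fin N → Bool, Real.exp (N / 2 * quadQ b c (mvec S σ)) := by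
  have e : Real.exp (N / 2 * (2 * Real.log 2 + Phi b c p))
      = ∑ σ : Fin N → Bool, Real.exp (N / 2 * ((b * p.1 + c * p.2) * (mvec S σ).1
          + (c * p.1 + b * p.2) * (mvec S σ).2)) * Real.exp (-(N / 2 * quadQ b c p)) := by
    rw [← Finset.sum_mul, sum_exp_mvec hN hN0 hS, ← Real.exp_add]
    unfold Phi
    congr 1
    ring
  rw [e]
  refine Finset.sum_le_sum fun σ _ => ?_
  rw [← Real.exp_add, Real.exp_le_exp]
  have h1 := quadQ_nonneg h (mvec S σ - p)
  rw [quadQ_sub] at h1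
  have h2 : (0 : ℝ) ≤ N / 2 := by positivity
  nlinarith

/-- Exponential Chebyshev bound with tilt `∇Q(v)`; equality of `∇Q(v) · v` and `2 Q(v)` makes the
exponent the same function `Φ` as in `partition_lower`. -/
theorem level_upper {b c : ℝ} {N : ℕ} (hN : Even N) (hN0 : N ≠ 0)
    {S : Finset (Fin N)} (hS : S.card = N / 2) (v : ℝ × ℝ) :
    ∑ σ : Fin N → Bool with mvec S σ = v, Real.exp (N / 2 * quadQ b c (mvec S σ))
      ≤ Real.exp (N / 2 * (2 * Real.log 2 + Phi b c v)) := by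
  have e : Real.exp (N / 2 * (2 * Real.log 2 + Phi b c v))
      = ∑ σ : Fin N → Bool, Real.exp (N / 2 * ((b * v.1 + c * v.2) * (mvec S σ).1
          + (c * v.1 + b * v.2) * (mvec S σ).2)) * Real.exp (-(N / 2 * quadQ b c v)) := by
    rw [← Finset.sum_mul, sum_exp_mvec hN hN0 hS, ← Real.exp_add]
    unfold Phi
    congr 1
    ring
  rw [e]
  refine le_trans (le_of_eq (Finset.sum_congr rfl fun σ hσ => ?_))
    (Finset.sum_le_sum_of_subset_of_nonneg (Finset.filter_subset _ _)
      fun σ _ _ => by positivity)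
  rw [(Finset.mem_filter.1 hσ).2, ← Real.exp_add, quadQ_grad]
  congr 1
  ring

/-- Union bound over the polynomially many values of `m`. -/
theorem tail_upper {b c M : ℝ} {N : ℕ} (hN : Even N) (hN0 : N ≠ 0)
    {S : Finset (Fin N)} (hS : S.card = N / 2) (C : Set (ℝ × ℝ))
    [DecidablePred (· ∈ C)] (hC : ∀ v ∈ C, Phi b c v ≤ M) :
    ∑ σ : Fin N → Bool with mvec S σ ∈ C, Real.exp (N / 2 * quadQ b c (mvec S σ))
      ≤ (N + 1) ^ 2 * Real.exp (N / 2 * (2 * Real.log 2 + M)) := by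
  set I := ((Finset.univ : Finset (Fin N → Bool)).image (mvec S)).filter (· ∈ C) with hI
  have hmaps : ∀ σ ∈ (Finset.univ : Finset (Fin N → Bool)).filter (fun σ => mvec S σ ∈ C),
      mvec S σ ∈ I := fun σ hσ => Finset.mem_filter.2
    ⟨Finset.mem_image_of_mem _ (Finset.mem_univ _), (Finset.mem_filter.1 hσ).2⟩
  rw [← Finset.sum_fiberwise_of_maps_to hmaps]
  calc _ ≤ ∑ v ∈ I, Real.exp (N / 2 * (2 * Real.log 2 + M)) := by
        refine Finset.sum_le_sum fun v hv => ?_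
        refine le_trans ?_ ((level_upper (b := b) (c := c) hN hN0 hS v).trans ?_)
        · refine Finset.sum_le_sum_of_subset_of_nonneg ?_ fun σ _ _ => (Real.exp_pos _).le
          rw [Finset.filter_filter]
          intro σ hσ
          simp only [Finset.mem_filter, Finset.mem_univ, true_and] at hσ ⊢
          exact hσ.2
        · rw [Real.exp_le_exp]
          have := hC v (Finset.mem_filter.1 hv).2
          gcongr
    _ ≤ _ := by
        rw [Finset.sum_const, nsmul_eq_mul]
        gcongr
        have : I.card ≤ (N + 1) ^ 2 :=
          (Finset.card_filter_le _ _).trans (card_image_mvec_le hN hS)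
        exact_mod_cast this

theorem tendsto_tail {δ : ℝ} (hδ : 0 < δ) (K : ℝ) :
    Tendsto (fun N : ℕ => K * (((N : ℝ) + 1) ^ 2 * Real.exp (-(N / 2 * δ)))) atTop (nhds 0) := by
  have hr : Real.exp (-(δ / 2)) < 1 := Real.exp_lt_one_iff.2 (by linarith)
  have hr0 := (Real.exp_pos (-(δ / 2))).le
  have h2 := tendsto_pow_const_mul_const_pow_of_lt_one 2 hr0 hr
  have h1 := tendsto_pow_const_mul_const_pow_of_lt_one 1 hr0 hr
  have h0 := tendsto_pow_const_mul_const_pow_of_lt_one 0 hr0 hr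
  have := ((h2.add (h1.const_mul 2)).add h0).const_mul K
  simp only [mul_zero, add_zero] at this
  refine this.congr fun N => ?_
  rw [← Real.exp_nat_mul, show (N : ℝ) * -(δ / 2) = -(N / 2 * δ) by ring]
  ring

theorem gibbsAvg_eq {N : ℕ} (S : Finset (Fin N)) (lam β : ℝ) (hN : N ≠ 0) (f : ℝ × ℝ → ℝ) :
    gibbsAvg (Htilde S lam β) (fun σ => f (m1 S σ, m2 S σ))
      = (∑ σ, Real.exp (N / 2 * quadQ (β / 2) (lam / 2) (mvec S σ)) * f (mvec S σ))
        / ∑ σ, Real.exp (N / 2 * quadQ (β / 2) (lam / 2) (mvec S σ)) := by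
  unfold gibbsAvg
  simp_rw [neg_Htilde S lam β _ hN]
  rfl

/-- Concentration: if `f` equals `L` at every maximizer of `Φ`, its Gibbs averages tend to `L`. -/
theorem concentration {β lam : ℝ} (hlam : |lam| < β)
    (S : ∀ N : ℕ, Finset (Fin N)) (hS : ∀ N, Even N → (S N).card = N / 2)
    (p : ℝ × ℝ) (hp : ∀ v, Phi (β / 2) (lam / 2) v ≤ Phi (β / 2) (lam / 2) p)
    (f : ℝ × ℝ → ℝ) (hf : IsBddCont f) (L : ℝ)
    (hL : ∀ v, Phi (β / 2) (lam / 2) v = Phi (β / 2) (lam / 2) p → f v = L) :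
    Tendsto (fun N : ℕ => gibbsAvg (Htilde (S N) lam β) fun σ => f (m1 (S N) σ, m2 (S N) σ))
      evenAtTop (nhds L) := by
  classical
  obtain ⟨hfc, K, hK⟩ := hf
  have hcb : |lam / 2| < β / 2 := by
    rw [abs_div, abs_of_pos (two_pos : (0 : ℝ) < 2)]; linarith
  set b := β / 2
  set c := lam / 2
  rw [Metric.tendsto_nhds]
  intro ε hε
  -- The part of the square `[-1,1]²` where `f` is far from `L` is compact and avoids all maximizers.
  set C : Set (ℝ × ℝ) := {v | ε / 2 ≤ |f v - L|} ∩ (Set.Icc (-1 : ℝ) 1 ×ˢ Set.Icc (-1 : ℝ) 1)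
    with hCdef
  have hCc : IsCompact C := (isCompact_Icc.prod isCompact_Icc).inter_left
    (isClosed_le continuous_const (hfc.sub continuous_const).abs)
  obtain ⟨δ, hδ, hCδ⟩ : ∃ δ > 0, ∀ v ∈ C, Phi b c v ≤ Phi b c p - δ := by
    rcases C.eq_empty_or_nonempty with h | h
    · exact ⟨1, one_pos, by simp [h]⟩
    · obtain ⟨w, hw, hmax⟩ := hCc.exists_isMaxOn h (continuous_Phi b c).continuousOn
      refine ⟨Phi b c p - Phi b c w, ?_, fun v hv => ?_⟩
      · refine sub_pos.2 (lt_of_le_of_ne (hp w) fun he => ?_)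
        have := hw.1
        rw [Set.mem_ofPred_eq, hL w he, sub_self, abs_zero] at this
        linarith
      · have : Phi b c v ≤ Phi b c w := hmax hv
        linarith
  have htail := (tendsto_tail hδ (K + |L|)).eventually (gt_mem_nhds (half_pos hε))
  rw [evenAtTop, Filter.eventually_inf_principal]
  filter_upwards [htail, Filter.eventually_ne_atTop 0] with N hNt hN0 hN
  have hN : Even N := hN
  have hSN := hS N hN
  rw [Real.dist_eq, gibbsAvg_eq _ _ _ hN0]
  set w : (Fin N → Bool) → ℝ := fun σ => Real.exp (N / 2 * quadQ b c (mvec (S N) σ)) with hw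
  have hwpos : ∀ σ, 0 < w σ := fun σ => Real.exp_pos _
  have hZ : Real.exp (N / 2 * (2 * Real.log 2 + Phi b c p)) ≤ ∑ σ, w σ :=
    partition_lower hcb hN hN0 hSN p
  have hT : ∑ σ with mvec (S N) σ ∈ C, w σ
      ≤ (N + 1) ^ 2 * Real.exp (N / 2 * (2 * Real.log 2 + (Phi b c p - δ))) :=
    tail_upper hN hN0 hSN C hCδ
  have hZpos : 0 < ∑ σ, w σ := (Real.exp_pos _).trans_le hZ
  have hKL : 0 ≤ K + |L| := add_nonneg ((abs_nonneg _).trans (hK 0)) (abs_nonneg _)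
  change |(∑ σ, w σ * f (mvec (S N) σ)) / (∑ σ, w σ) - L| < ε
  have e1 : (∑ σ, w σ * f (mvec (S N) σ)) / (∑ σ, w σ) - L
      = (∑ σ, w σ * (f (mvec (S N) σ) - L)) / ∑ σ, w σ := by
    rw [div_sub' hZpos.ne']
    congr 1
    simp_rw [mul_sub]
    rw [Finset.sum_sub_distrib, Finset.sum_mul]
  rw [e1, abs_div, abs_of_pos hZpos, div_lt_iff₀ hZpos]
  calc |∑ σ, w σ * (f (mvec (S N) σ) - L)|
      ≤ ∑ σ, |w σ * (f (mvec (S N) σ) - L)| := Finset.abs_sum_le_sum_abs _ _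
    _ ≤ ∑ σ, (ε / 2 * w σ + if mvec (S N) σ ∈ C then (K + |L|) * w σ else 0) := by
        refine Finset.sum_le_sum fun σ _ => ?_
        rw [abs_mul, abs_of_pos (hwpos σ)]
        have h0 := hwpos σ
        split_ifs with h
        · have : |f (mvec (S N) σ) - L| ≤ K + |L| :=
            (abs_sub _ _).trans (add_le_add_left (hK _) _)
          nlinarith
        · have : |f (mvec (S N) σ) - L| < ε / 2 := by
            by_contra! hcon
            exact h ⟨hcon, mvec_mem hN hN0 hSN σ⟩
          nlinarith
    _ = ε / 2 * ∑ σ, w σ + (K + |L|) * ∑ σ with mvec (S N) σ ∈ C, w σ := by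
        rw [Finset.sum_add_distrib, Finset.mul_sum, Finset.mul_sum, Finset.sum_filter]
    _ ≤ ε / 2 * ∑ σ, w σ + (K + |L|) * ((N + 1) ^ 2 * Real.exp (-(N / 2 * δ))) * ∑ σ, w σ := by
        rw [mul_assoc (K + |L|)]
        gcongr ε / 2 * ∑ σ, w σ + (K + |L|) * ?_
        refine hT.trans ?_
        rw [mul_assoc]
        gcongr
        refine le_trans (le_of_eq ?_) (mul_le_mul_of_nonneg_left hZ (Real.exp_pos _).le)
        rw [← Real.exp_add]
        congr 1
        ring
    _ < ε * ∑ σ, w σ := by nlinarith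

/-! ### Symmetries -/

/-- Flipping the spins in `T`. -/
def flipEquiv {N : ℕ} (T : Finset (Fin N)) : (Fin N → Bool) ≃ (Fin N → Bool) :=
  Function.Involutive.toPerm (fun σ i => if i ∈ T then !σ i else σ i) fun σ => by
    funext i; dsimp only; split_ifs <;> simp

theorem sum_spin_flip {N : ℕ} (T U : Finset (Fin N)) (hU : U ⊆ T) (σ : Fin N → Bool) :
    ∑ i ∈ U, spin (flipEquiv T σ i) = -∑ i ∈ U, spin (σ i) := by
  rw [← Finset.sum_neg_distrib]
  refine Finset.sum_congr rfl fun i hi => ?_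
  change spin (if i ∈ T then !σ i else σ i) = _
  rw [if_pos (hU hi)]
  cases σ i <;> simp [spin]

theorem sum_spin_flip_disj {N : ℕ} (T U : Finset (Fin N)) (hU : Disjoint U T)
    (σ : Fin N → Bool) : ∑ i ∈ U, spin (flipEquiv T σ i) = ∑ i ∈ U, spin (σ i) := by
  refine Finset.sum_congr rfl fun i hi => ?_
  change spin (if i ∈ T then !σ i else σ i) = _
  rw [if_neg (Finset.disjoint_left.1 hU hi)]

theorem sum_mvec_neg_fst {N : ℕ} (S : Finset (Fin N)) (g : ℝ × ℝ → ℝ) :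
    ∑ σ, g (mvec S σ) = ∑ σ, g (-(mvec S σ).1, (mvec S σ).2) := by
  rw [← Equiv.sum_comp (flipEquiv S)]
  refine Finset.sum_congr rfl fun σ _ => ?_
  simp only [mvec, m1, m2, sum_spin_flip S S subset_rfl,
    sum_spin_flip_disj S Sᶜ disjoint_compl_left, mul_neg]

theorem sum_mvec_neg_snd {N : ℕ} (S : Finset (Fin N)) (g : ℝ × ℝ → ℝ) :
    ∑ σ, g (mvec S σ) = ∑ σ, g ((mvec S σ).1, -(mvec S σ).2) := by
  rw [← Equiv.sum_comp (flipEquiv Sᶜ)]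
  refine Finset.sum_congr rfl fun σ _ => ?_
  simp only [mvec, m1, m2, sum_spin_flip Sᶜ Sᶜ subset_rfl,
    sum_spin_flip_disj Sᶜ S disjoint_compl_right, mul_neg]

theorem gibbsAvg_neg {N : ℕ} (S : Finset (Fin N)) (lam β : ℝ) (hN : N ≠ 0) (f : ℝ × ℝ → ℝ) :
    gibbsAvg (Htilde S lam β) (fun σ => f (m1 S σ, m2 S σ))
      = gibbsAvg (Htilde S lam β) (fun σ => f (-m1 S σ, -m2 S σ)) := by
  rw [gibbsAvg_eq S lam β hN f, gibbsAvg_eq S lam β hN fun v => f (-v.1, -v.2)]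
  congr 1
  rw [sum_mvec_neg_fst S fun v => Real.exp (N / 2 * quadQ (β / 2) (lam / 2) v) * f v,
    sum_mvec_neg_snd S fun v => Real.exp (N / 2 * quadQ (β / 2) (lam / 2) (-v.1, v.2))
      * f (-v.1, v.2)]
  refine Finset.sum_congr rfl fun σ _ => ?_
  unfold quadQ
  simp

theorem gibbsAvg_neg_fst {N : ℕ} (S : Finset (Fin N)) (β : ℝ) (hN : N ≠ 0) (f : ℝ × ℝ → ℝ) :
    gibbsAvg (Htilde S 0 β) (fun σ => f (m1 S σ, m2 S σ))
      = gibbsAvg (Htilde S 0 β) (fun σ => f (-m1 S σ, m2 S σ)) := by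
  rw [gibbsAvg_eq S 0 β hN f, gibbsAvg_eq S 0 β hN fun v => f (-v.1, v.2)]
  congr 1
  rw [sum_mvec_neg_fst S fun v => Real.exp (N / 2 * quadQ (β / 2) (0 / 2) v) * f v]
  refine Finset.sum_congr rfl fun σ _ => ?_
  unfold quadQ
  simp

theorem gibbsAvg_midpoint {N : ℕ} (H g h : (Fin N → Bool) → ℝ) (hgh : gibbsAvg H g = gibbsAvg H h) :
    gibbsAvg H g = gibbsAvg H fun σ => (1 / 2) * (g σ + h σ) := by
  have : gibbsAvg H (fun σ => (1 / 2) * (g σ + h σ)) = (1 / 2) * (gibbsAvg H g + gibbsAvg H h) := by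
    unfold gibbsAvg
    rw [← add_div, ← Finset.sum_add_distrib, mul_div_assoc', Finset.mul_sum]
    congr 1
    exact Finset.sum_congr rfl fun σ _ => by ring
  rw [this, ← hgh]
  ring

theorem IsBddCont.midpoint {f g : ℝ × ℝ → ℝ} (hf : IsBddCont f) (hg : IsBddCont g) :
    IsBddCont fun v => (1 / 2) * (f v + g v) := by
  obtain ⟨hf, K, hK⟩ := hf
  obtain ⟨hg, K', hK'⟩ := hg
  refine ⟨by fun_prop, K + K', fun v => ?_⟩
  have h1 := abs_le.1 (hK v)
  have h2 := abs_le.1 (hK' v)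
  rw [abs_le]
  constructor <;> linarith

theorem IsBddCont.comp {f : ℝ × ℝ → ℝ} (hf : IsBddCont f) {g : ℝ × ℝ → ℝ × ℝ}
    (hg : Continuous g) : IsBddCont fun v => f (g v) :=
  ⟨hf.1.comp hg, hf.2.imp fun _ h v => h (g v)⟩

theorem eventually_ne_zero_evenAtTop : ∀ᶠ N in evenAtTop, N ≠ 0 :=
  Filter.Eventually.filter_mono inf_le_left (Filter.eventually_ne_atTop 0)

/-- weak limits of the distribution of the group opinion vector `m` under the
Gibbs measure of the fully connected block Hamiltonian, in the four phases. -/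
theorem block_model_weak_limits (β lam : ℝ) (hβ : 0 < β) (hlam : |lam| < β)
    (S : ∀ N : ℕ, Finset (Fin N)) (hS : ∀ N, Even N → (S N).card = N / 2) :
    (β + |lam| ≤ 2 →
      ∀ f : ℝ × ℝ → ℝ, IsBddCont f →
        Filter.Tendsto
          (fun N : ℕ => gibbsAvg (Htilde (S N) lam β) fun σ => f (m1 (S N) σ, m2 (S N) σ))
          evenAtTop (nhds (f (0, 0)))) ∧
    (2 < β + |lam| → lam = 0 →
      ∀ z : ℝ, IsLargestCW (β / 2) z →
        ∀ f : ℝ × ℝ → ℝ, IsBddCont f →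
          Filter.Tendsto
            (fun N : ℕ => gibbsAvg (Htilde (S N) lam β) fun σ => f (m1 (S N) σ, m2 (S N) σ))
            evenAtTop
            (nhds ((1 / 4) * (f (z, z) + f (z, -z) + f (-z, z) + f (-z, -z))))) ∧
    (2 < β + |lam| → 0 < lam →
      ∀ z : ℝ, IsLargestCW ((lam + β) / 2) z →
        ∀ f : ℝ × ℝ → ℝ, IsBddCont f →
          Filter.Tendsto
            (fun N : ℕ => gibbsAvg (Htilde (S N) lam β) fun σ => f (m1 (S N) σ, m2 (S N) σ))
            evenAtTop (nhds ((1 / 2) * (f (z, z) + f (-z, -z))))) ∧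
    (2 < β + |lam| → lam < 0 →
      ∀ z : ℝ, IsLargestCW ((β - lam) / 2) z →
        ∀ f : ℝ × ℝ → ℝ, IsBddCont f →
          Filter.Tendsto
            (fun N : ℕ => gibbsAvg (Htilde (S N) lam β) fun σ => f (m1 (S N) σ, m2 (S N) σ))
            evenAtTop (nhds ((1 / 2) * (f (z, -z) + f (-z, z))))) := by
  have hβ2 : |lam / 2| < β / 2 := by
    rw [abs_div, abs_of_pos (two_pos : (0 : ℝ) < 2)]; linarith
  have habs : ∀ {x z : ℝ}, |x| = z → x = z ∨ x = -z := fun {x z} h => by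
    rcases abs_choice x with h' | h' <;> rw [h'] at h
    · exact Or.inl h
    · exact Or.inr (by linarith)
  refine ⟨fun hle f hf => ?_, fun hgt h0 z hz f hf => ?_, fun hgt hpos z hz f hf => ?_,
    fun hgt hneg z hz f hf => ?_⟩
  · -- Below criticality `0` is the only maximizer; the sign of `λ` is absorbed by `Phi_flip`.
    have hcw : IsCWPoint (β / 2 + |lam / 2|) 0 := by
      apply isCWPoint_zero
      · positivity
      · rw [abs_div, abs_of_pos (two_pos : (0 : ℝ) < 2)]; linarith
    have hΦ : ∀ v : ℝ × ℝ, Phi (β / 2) (lam / 2) v = Phi (β / 2) |lam / 2| v ∨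
        Phi (β / 2) (lam / 2) v = Phi (β / 2) |lam / 2| (v.1, -v.2) := by
      intro v
      rcases abs_choice (lam / 2) with h | h <;> rw [h]
      · exact Or.inl rfl
      · exact Or.inr (Phi_flip _ _ v.1 v.2)
    have hm : Phi (β / 2) (lam / 2) (0, 0) = 2 * cwPhi (β / 2 + |lam / 2|) 0 := by
      rw [← Phi_at_max]
      rcases hΦ (0, 0) with h | h <;> rw [h]
      simp
    refine concentration hlam S hS (0, 0) (fun v => ?_) f hf _ fun v hv => ?_
    · rw [hm]
      rcases hΦ v with h | h <;> rw [h] <;> exact Phi_le (abs_nonneg _) hβ2 hcw _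
    · rw [hm] at hv
      rcases hΦ v with h | h <;> rw [h] at hv <;>
        obtain ⟨h1, h2, -⟩ := Phi_eq_max (abs_nonneg _) hβ2 hcw hv <;>
        simp only [abs_neg, abs_eq_zero] at h1 h2 <;>
        rw [show v = (0, 0) from Prod.ext h1 h2]
  · subst h0
    have hcw : IsCWPoint (β / 2 + 0 / 2) z := by
      rw [zero_div, add_zero]
      exact isCWPoint_of_isLargestCW (by simp at hgt; linarith) hz
    have h02 : (0 : ℝ) ≤ 0 / 2 := by simp
    have h0b : (0 : ℝ) / 2 < β / 2 := by linarith
    -- `f₁` is `f` averaged over `v ↦ -v`, and `f₂` is `f₁` averaged over `v₁ ↦ -v₁`.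
    set f₁ : ℝ × ℝ → ℝ := fun v => (1 / 2) * (f v + f (-v.1, -v.2)) with hf₁
    set f₂ : ℝ × ℝ → ℝ := fun v => (1 / 2) * (f₁ v + f₁ (-v.1, v.2)) with hf₂
    have hb₁ : IsBddCont f₁ := hf.midpoint (hf.comp (g := fun v => (-v.1, -v.2)) (by fun_prop))
    have hb₂ : IsBddCont f₂ := hb₁.midpoint (hb₁.comp (g := fun v => (-v.1, v.2)) (by fun_prop))
    refine (concentration hlam S hS (z, z) (fun v => ?_) f₂ hb₂ _ fun v hv => ?_).congr' ?_
    · rw [Phi_at_max]; exact Phi_le h02 h0b hcw v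
    · rw [Phi_at_max] at hv
      obtain ⟨h1, h2, -⟩ := Phi_eq_max h02 h0b hcw hv
      obtain ⟨x, y⟩ := v
      rcases habs h1 with h1 | h1 <;> rcases habs h2 with h2 | h2 <;> dsimp only at h1 h2 <;>
        rw [h1, h2] <;> simp only [hf₂, hf₁, neg_neg] <;> ring
    · filter_upwards [eventually_ne_zero_evenAtTop] with N hN
      rw [gibbsAvg_midpoint _ _ _ (gibbsAvg_neg (S N) 0 β hN f),
        gibbsAvg_midpoint _ _ _ (gibbsAvg_neg_fst (S N) β hN f₁)]
  · rw [abs_of_pos hpos] at hgt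
    have hcw : IsCWPoint (β / 2 + lam / 2) z := by
      rw [show β / 2 + lam / 2 = (lam + β) / 2 by ring]
      exact isCWPoint_of_isLargestCW (by linarith) hz
    have h02 : 0 ≤ lam / 2 := by linarith
    have h0b : lam / 2 < β / 2 := (le_abs_self _).trans_lt hβ2
    refine (concentration hlam S hS (z, z) (fun v => ?_) _
      (hf.midpoint (hf.comp (g := fun v => (-v.1, -v.2)) (by fun_prop))) _
      fun v hv => ?_).congr' ?_
    · rw [Phi_at_max]; exact Phi_le h02 h0b hcw v
    · rw [Phi_at_max] at hv
      obtain ⟨h1, -, h3⟩ := Phi_eq_max h02 h0b hcw hv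
      obtain ⟨x, y⟩ := v
      have h3 : x = y := h3 (by linarith)
      subst h3
      rcases habs h1 with h1 | h1 <;> dsimp only at h1 <;> subst h1 <;>
        simp only [neg_neg] <;> ring
    · filter_upwards [eventually_ne_zero_evenAtTop] with N hN
      rw [gibbsAvg_midpoint _ _ _ (gibbsAvg_neg (S N) lam β hN f)]
  · rw [abs_of_neg hneg] at hgt
    have hcw : IsCWPoint (β / 2 + -(lam / 2)) z := by
      rw [show β / 2 + -(lam / 2) = (β - lam) / 2 by ring]
      exact isCWPoint_of_isLargestCW (by linarith) hz
    have h02 : 0 ≤ -(lam / 2) := by linarith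
    have h0b : -(lam / 2) < β / 2 := (neg_le_abs _).trans_lt hβ2
    have hm : Phi (β / 2) (lam / 2) (z, -z) = 2 * cwPhi (β / 2 + -(lam / 2)) z := by
      rw [Phi_flip, neg_neg, Phi_at_max]
    refine (concentration hlam S hS (z, -z) (fun v => ?_) _
      (hf.midpoint (hf.comp (g := fun v => (-v.1, -v.2)) (by fun_prop))) _
      fun v hv => ?_).congr' ?_
    · rw [hm, Phi_flip _ _ v.1 v.2]; exact Phi_le h02 h0b hcw _
    · rw [hm, Phi_flip _ _ v.1 v.2] at hv
      obtain ⟨h1, -, h3⟩ := Phi_eq_max h02 h0b hcw hv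
      obtain ⟨x, y⟩ := v
      have h3 : x = -y := h3 (by linarith)
      obtain rfl : y = -x := by linarith
      rcases habs h1 with h1 | h1 <;> dsimp only at h1 <;> subst h1 <;>
        simp only [neg_neg] <;> ring
    · filter_upwards [eventually_ne_zero_evenAtTop] with N hN
      rw [gibbsAvg_midpoint _ _ _ (gibbsAvg_neg (S N) lam β hN f)]
end

section
/- Let β > 0, α ∈ ℝ, and let 0 < q_N ≤ p_N ≤ 1 satisfy N·p_N → ∞ and q_N/p_N → a ∈ [0,1] with |α|·a ≤ β. Let γ_N, κ_N → 0 and suppose for each even N the edge variables (ε_N, δ_N) belong to E_N^*(γ_N, κ_N, p_N, q_N). If β + |α·a| ≤ 2, then the distribution of the group opinion vector m under the Gibbs measure μ_{N,α,β,ε_N,δ_N} converges weakly, as N → ∞ through even N, to the Dirac measure at (0,0) ∈ ℝ². -/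
/-!
Write `v = (m₁, m₂)`.  Applying the conditions of `Estar` to `σ` and to the all-plus configuration
shows that the diluted Hamiltonian differs from the complete block Hamiltonian with interaction
`λ = α a` by at most `N η_N` with `η_N → 0` (`Hdil_close`).  For the complete Hamiltonian,
`-H̃ = N/8 (β |v|² + 2 λ m₁ m₂)`.  Since `|λ| ≤ β` this is nonnegative, so the partition function
is at least `2^N exp (-N η_N)`; since `β + |λ| ≤ 2` it is at most `N/4 |v|²`.

It remains to bound the total weight `exp (N/4 |v|²)` of the configurations with `|m₁| ≥ d` or
`|m₂| ≥ d`.  There are at most `(N+1)²` values of `v`.  On the fibre over `v = (x, y)` the weight is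
an exponential tilt, with total mass at most
`2^N (cosh x exp (-x²/2))^(N/2) (cosh y exp (-y²/2))^(N/2)`, and `cosh x exp (-x²/2)` is at most `1`
everywhere and at most some `r < 1` for `|x| ≥ d` (`cosh_mul_exp_le`).  This yields the bound
`(N+1)² 2^N r^(N/2)` (`bad_weight_le`), exponentially small relative to the partition function even
after the `exp (2 N η_N)` distortion, so the Gibbs measure concentrates at the origin.
-/

open Finset Filter

/-! ### Elementary bounds -/

/-- The strict form of `cosh x ≤ exp (x² / 2)`, uniform in `|x| ≥ d`.  It comes from
`cosh x = 2 cosh² (x/2) - 1` and completing a square in `exp (-x²/4)`. -/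
lemma cosh_mul_exp_le (d x : ℝ) (hd : 0 ≤ d) (hx : d ≤ |x|) :
    Real.cosh x * Real.exp (-(x ^ 2 / 2)) ≤ 1 - (1 - Real.exp (-(d ^ 2 / 4))) ^ 2 := by
  set u := Real.exp (-(x ^ 2 / 4)) with hu
  have hu0 : 0 < u := Real.exp_pos _
  have hsq : Real.exp (-(x ^ 2 / 2)) = u ^ 2 := by
    rw [hu, ← Real.exp_nat_mul]; congr 1; push_cast; ring
  have hdx : d ^ 2 ≤ x ^ 2 := by
    rw [← sq_abs x]; gcongr
  have hud : u ≤ Real.exp (-(d ^ 2 / 4)) := Real.exp_le_exp.mpr (by linarith)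
  have hd1 : Real.exp (-(d ^ 2 / 4)) ≤ 1 := Real.exp_le_one_iff.mpr (by nlinarith)
  have hc : Real.cosh x = 2 * Real.cosh (x / 2) ^ 2 - 1 := by
    have h := Real.cosh_two_mul (x / 2)
    have h2 := Real.cosh_sq (x / 2)
    rw [show 2 * (x / 2) = x by ring] at h
    linarith
  have hh : Real.cosh (x / 2) ^ 2 * u ≤ 1 := by
    have h1 : Real.cosh (x / 2) ≤ Real.exp ((x / 2) ^ 2 / 2) := Real.cosh_le_exp_half_sq _
    have h2 : Real.cosh (x / 2) ^ 2 ≤ Real.exp (x ^ 2 / 4) := by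
      calc Real.cosh (x / 2) ^ 2 ≤ Real.exp ((x / 2) ^ 2 / 2) ^ 2 :=
            pow_le_pow_left₀ (Real.cosh_pos _).le h1 2
        _ = Real.exp (x ^ 2 / 4) := by
            rw [← Real.exp_nat_mul]; congr 1; push_cast; ring
    calc Real.cosh (x / 2) ^ 2 * u ≤ Real.exp (x ^ 2 / 4) * u := by gcongr
      _ = 1 := by rw [hu, ← Real.exp_add]; simp
  rw [hsq, hc]
  nlinarith [mul_le_mul_of_nonneg_right hh hu0.le]

lemma cosh_mul_exp_le_one (x : ℝ) : Real.cosh x * Real.exp (-(x ^ 2 / 2)) ≤ 1 := by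
  simpa using cosh_mul_exp_le 0 x le_rfl (abs_nonneg x)

/-- If a mean-corrected weight `f` has small sum over `T` and over the part of `T` where the sign
`s` equals `+1`, or where it equals `-1`, then the signed sum over `T` is small. -/
lemma signed_sum_le {ι : Type*} (T : Finset ι) (f s : ι → ℝ)
    (hs : ∀ i, s i = 1 ∨ s i = -1) (B : ℝ) (hT : |∑ i ∈ T, f i| ≤ B)
    (hL : |∑ i ∈ T with s i = 1, f i| ≤ B ∨ |∑ i ∈ T with s i = -1, f i| ≤ B) :
    |∑ i ∈ T, f i * s i| ≤ 3 * B := by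
  have e1 : ∑ i ∈ T, f i * s i = 2 * (∑ i ∈ T with s i = 1, f i) - ∑ i ∈ T, f i := by
    rw [Finset.sum_filter, Finset.mul_sum, ← Finset.sum_sub_distrib]
    refine Finset.sum_congr rfl fun i _ => ?_
    rcases hs i with h | h <;> rw [h] <;> norm_num; ring
  have e2 : ∑ i ∈ T, f i * s i = (∑ i ∈ T, f i) - 2 * (∑ i ∈ T with s i = -1, f i) := by
    rw [Finset.sum_filter, Finset.mul_sum, ← Finset.sum_sub_distrib]
    refine Finset.sum_congr rfl fun i _ => ?_
    rcases hs i with h | h <;> rw [h] <;> norm_num; ring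
  rw [abs_le] at hT
  rcases hL with h | h <;> rw [abs_le] at h
  · rw [e1, abs_le]; constructor <;> linarith [hT.1, hT.2, h.1, h.2]
  · rw [e2, abs_le]; constructor <;> linarith [hT.1, hT.2, h.1, h.2]

/-! ### The complete block Hamiltonian in terms of the magnetizations -/

section Block

variable {N : ℕ} (S : Finset (Fin N)) (σ : Fin N → Bool)

lemma sum_sim_eq :
    ∑ i, ∑ j, (if sim S i j then spin (σ i) * spin (σ j) else 0)
      = (∑ i ∈ S, spin (σ i)) ^ 2 + (∑ i ∈ Sᶜ, spin (σ i)) ^ 2 := by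
  have h1 : ∑ i ∈ S, spin (σ i) = ∑ i, if i ∈ S then spin (σ i) else 0 := by simp
  have h2 : ∑ i ∈ Sᶜ, spin (σ i) = ∑ i, if i ∈ S then 0 else spin (σ i) := by
    rw [← Finset.sum_add_sum_compl S (fun i => if i ∈ S then 0 else spin (σ i)),
      Finset.sum_eq_zero (s := S) (fun i hi => if_pos hi), zero_add]
    exact Finset.sum_congr rfl fun i hi => (if_neg (Finset.mem_compl.mp hi)).symm
  rw [h1, h2, sq, sq, Finset.sum_mul_sum, Finset.sum_mul_sum, ← Finset.sum_add_distrib]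
  refine Finset.sum_congr rfl fun i _ => ?_
  rw [← Finset.sum_add_distrib]
  refine Finset.sum_congr rfl fun j _ => ?_
  by_cases hi : i ∈ S <;> by_cases hj : j ∈ S <;> simp [sim, hi, hj]

lemma sum_not_sim_eq :
    ∑ i, ∑ j, (if ¬ sim S i j then spin (σ i) * spin (σ j) else 0)
      = 2 * ((∑ i ∈ S, spin (σ i)) * (∑ i ∈ Sᶜ, spin (σ i))) := by
  have h := sum_sim_eq S σ
  have ht : (∑ i ∈ S, spin (σ i)) + (∑ i ∈ Sᶜ, spin (σ i)) = ∑ i, spin (σ i) :=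
    Finset.sum_add_sum_compl S _
  have hall : ∑ i, ∑ j, (if sim S i j then spin (σ i) * spin (σ j) else 0)
      + ∑ i, ∑ j, (if ¬ sim S i j then spin (σ i) * spin (σ j) else 0)
      = (∑ i, spin (σ i)) ^ 2 := by
    rw [sq, Finset.sum_mul_sum, ← Finset.sum_add_distrib]
    refine Finset.sum_congr rfl fun i _ => ?_
    rw [← Finset.sum_add_distrib]
    refine Finset.sum_congr rfl fun j _ => ?_
    by_cases h : sim S i j <;> simp [h]
  rw [← ht] at hall
  linarith [hall, h, add_sq (∑ i ∈ S, spin (σ i)) (∑ i ∈ Sᶜ, spin (σ i))]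

lemma neg_Htilde_eq (hN : 0 < N) (lam β : ℝ) :
    -Htilde S lam β σ
      = N / 8 * (β * ((m1 S σ) ^ 2 + (m2 S σ) ^ 2) + 2 * lam * (m1 S σ * m2 S σ)) := by
  have hN' : (N : ℝ) ≠ 0 := by positivity
  unfold Htilde m1 m2
  rw [sum_sim_eq, sum_not_sim_eq]
  field_simp
  ring

lemma neg_Htilde_nonneg (hN : 0 < N) (lam β : ℝ) (h : |lam| ≤ β) :
    0 ≤ -Htilde S lam β σ := by
  rw [neg_Htilde_eq S σ hN]
  refine mul_nonneg (by positivity) ?_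
  obtain ⟨h1, h2⟩ := abs_le.mp h
  nlinarith [mul_nonneg (by linarith : 0 ≤ β + lam) (sq_nonneg (m1 S σ + m2 S σ)),
    mul_nonneg (by linarith : 0 ≤ β - lam) (sq_nonneg (m1 S σ - m2 S σ))]

lemma neg_Htilde_le (hN : 0 < N) (lam β : ℝ) (h : β + |lam| ≤ 2) :
    -Htilde S lam β σ ≤ N / 4 * ((m1 S σ) ^ 2 + (m2 S σ) ^ 2) := by
  rw [neg_Htilde_eq S σ hN]
  have hl : 2 * lam * (m1 S σ * m2 S σ) ≤ |lam| * ((m1 S σ) ^ 2 + (m2 S σ) ^ 2) := by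
    rcases abs_cases lam with ⟨h1, h2⟩ | ⟨h1, h2⟩ <;> rw [h1]
    · nlinarith [mul_nonneg h2 (sq_nonneg (m1 S σ - m2 S σ))]
    · nlinarith [mul_nonneg (neg_nonneg.mpr h2.le) (sq_nonneg (m1 S σ + m2 S σ))]
  have hs : 0 ≤ (m1 S σ) ^ 2 + (m2 S σ) ^ 2 := by positivity
  have : β * ((m1 S σ) ^ 2 + (m2 S σ) ^ 2) + 2 * lam * (m1 S σ * m2 S σ)
      ≤ 2 * ((m1 S σ) ^ 2 + (m2 S σ) ^ 2) := by nlinarith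
  have hN0 : (0 : ℝ) ≤ N := by positivity
  nlinarith

/-! ### Comparison of the diluted and the complete Hamiltonian -/

lemma card_le_sq (T : Finset (Fin N × Fin N)) : (T.card : ℝ) ≤ (N : ℝ) ^ 2 := by
  have h := Finset.card_le_univ T
  rw [Fintype.card_prod, Fintype.card_fin] at h
  rw [sq]
  exact_mod_cast h

/-- A relative error bound on the edge count of `T` gives an absolute bound on the centred sum. -/
lemma centred_sum_le (T : Finset (Fin N × Fin N)) (e : Fin N → Fin N → ℝ) (p g : ℝ) (hp : 0 ≤ p)
    (h : |(∑ ij ∈ T, e ij.1 ij.2) - p * T.card| ≤ g * p * T.card) :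
    |∑ ij ∈ T, (e ij.1 ij.2 - p)| ≤ |g| * p * (N : ℝ) ^ 2 := by
  rw [Finset.sum_sub_distrib, Finset.sum_const, nsmul_eq_mul, mul_comm (T.card : ℝ) p]
  refine h.trans ?_
  calc g * p * T.card ≤ |g| * p * T.card := by gcongr; exact le_abs_self g
    _ ≤ |g| * p * (N : ℝ) ^ 2 := by gcongr; exact card_le_sq T

/-- The centred energy as a sum over ordered pairs. -/
lemma sum_pairs_eq (P : Fin N → Fin N → Prop) [∀ i j, Decidable (P i j)]
    (e : Fin N → Fin N → ℝ) (p : ℝ) :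
    (∑ i, ∑ j, (if P i j then e i j * (spin (σ i) * spin (σ j)) else 0))
      - p * ∑ i, ∑ j, (if P i j then spin (σ i) * spin (σ j) else 0)
      = ∑ ij ∈ (univ.filter fun ij : Fin N × Fin N => P ij.1 ij.2),
          (e ij.1 ij.2 - p) * (spin (σ ij.1) * spin (σ ij.2)) := by
  rw [Finset.sum_filter, Fintype.sum_prod_type, Finset.mul_sum, ← Finset.sum_sub_distrib]
  refine Finset.sum_congr rfl fun i _ => ?_
  rw [Finset.mul_sum, ← Finset.sum_sub_distrib]
  refine Finset.sum_congr rfl fun j _ => ?_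
  split_ifs <;> ring

lemma spin_mul_eq_or (b c : Bool) : spin b * spin c = 1 ∨ spin b * spin c = -1 := by
  cases b <;> cases c <;> simp [spin]

lemma within_sum_close (γ κ p q : ℝ) (ε δ : Fin N → Fin N → ℝ) (hp : 0 ≤ p)
    (hE : Estar S γ κ p q ε δ) :
    |(∑ i, ∑ j, (if sim S i j then ε i j * (spin (σ i) * spin (σ j)) else 0))
      - p * ∑ i, ∑ j, (if sim S i j then spin (σ i) * spin (σ j) else 0)|
      ≤ 3 * (|γ| * p * (N : ℝ) ^ 2) := by
  rw [sum_pairs_eq]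
  apply signed_sum_le _ _ _ (fun ij => spin_mul_eq_or _ _)
  · -- for the all-plus configuration every within-block pair is aligned
    have h := (hE fun _ => true).1
    have hT : Lbp S (fun _ => true) = univ.filter fun ij : Fin N × Fin N => sim S ij.1 ij.2 := by
      simp [Lbp, spin]
    rw [hT] at h
    exact centred_sum_le _ _ _ _ hp h
  · left
    rw [Finset.filter_filter]
    exact centred_sum_le _ _ _ _ hp (hE σ).1

lemma between_sum_close (γ κ p q : ℝ) (ε δ : Fin N → Fin N → ℝ) (hq : 0 ≤ q)
    (hE : Estar S γ κ p q ε δ) :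
    |(∑ i, ∑ j, (if ¬ sim S i j then δ i j * (spin (σ i) * spin (σ j)) else 0))
      - q * ∑ i, ∑ j, (if ¬ sim S i j then spin (σ i) * spin (σ j) else 0)|
      ≤ 3 * (|κ| * q * (N : ℝ) ^ 2) := by
  rw [sum_pairs_eq (P := fun i j => ¬ sim S i j)]
  apply signed_sum_le _ _ _ (fun ij => spin_mul_eq_or _ _)
  · -- for the all-plus configuration every between-block pair is aligned
    have h := (hE fun _ => true).2.1 (by simp only [m1, m2, spin]; simp; positivity)
    have hT : Lnbp S (fun _ => true)
        = univ.filter fun ij : Fin N × Fin N => ¬ sim S ij.1 ij.2 := by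
      simp [Lnbp, spin]
    rw [hT] at h
    exact centred_sum_le _ _ _ _ hq h
  · rcases le_or_gt 0 (m1 S σ * m2 S σ) with hm | hm
    · left
      rw [Finset.filter_filter]
      exact centred_sum_le _ _ _ _ hq ((hE σ).2.1 hm)
    · right
      rw [Finset.filter_filter]
      exact centred_sum_le _ _ _ _ hq ((hE σ).2.2 hm)

/-- The bound is `o(N)` as soon as `γ`, `κ` and `q/p - a` tend to zero.  The numbers of pairs within
and between the blocks are both bounded crudely by `N²`. -/
lemma Hdil_close (hN : 0 < N) (α β γ κ p q a : ℝ) (hβ : 0 ≤ β) (hq : 0 < q) (hqp : q ≤ p)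
    (ε δ : Fin N → Fin N → ℝ) (hE : Estar S γ κ p q ε δ) :
    |Hdil S α β p ε δ σ - Htilde S (α * a) β σ|
      ≤ N * (3 / 2 * β * |γ| + 3 / 2 * |α| * |κ| + 1 / 2 * |α| * |q / p - a|) := by
  have hp : 0 < p := hq.trans_le hqp
  have hN' : (0 : ℝ) < N := by exact_mod_cast hN
  have h1 := within_sum_close S σ γ κ p q ε δ hp.le hE
  have h2 := between_sum_close S σ γ κ p q ε δ hq.le hE
  have h3 : |∑ i, ∑ j, (if ¬ sim S i j then spin (σ i) * spin (σ j) else 0)| ≤ (N : ℝ) ^ 2 := by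
    rw [sq]
    refine (Finset.abs_sum_le_sum_abs _ _).trans ?_
    have : ∀ i ∈ (univ : Finset (Fin N)),
        |∑ j, (if ¬ sim S i j then spin (σ i) * spin (σ j) else 0)| ≤ (N : ℝ) := by
      intro i _
      refine (Finset.abs_sum_le_sum_abs _ _).trans ?_
      have : ∀ j ∈ (univ : Finset (Fin N)),
          |(if ¬ sim S i j then spin (σ i) * spin (σ j) else 0)| ≤ (1 : ℝ) := by
        intro j _
        split_ifs
        · norm_num
        · rcases spin_mul_eq_or (σ i) (σ j) with h | h <;> rw [h] <;> norm_num
      simpa using Finset.sum_le_sum this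
    simpa using Finset.sum_le_sum this
  unfold Hdil Htilde
  set A := ∑ i, ∑ j, (if sim S i j then ε i j * (spin (σ i) * spin (σ j)) else 0)
  set A' := ∑ i, ∑ j, (if sim S i j then spin (σ i) * spin (σ j) else 0)
  set B := ∑ i, ∑ j, (if ¬ sim S i j then δ i j * (spin (σ i) * spin (σ j)) else 0)
  set B' := ∑ i, ∑ j, (if ¬ sim S i j then spin (σ i) * spin (σ j) else 0)
  have hid : -(β / (2 * N * p)) * A - α / (2 * N * p) * B
        - (-(β / (2 * N)) * A' - α * a / (2 * N) * B')
      = -(β / (2 * N * p)) * (A - p * A') + -(α / (2 * N * p)) * (B - q * B')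
        + -(α / (2 * N) * (q / p - a)) * B' := by
    field_simp
    ring
  rw [hid]
  have t1 : |-(β / (2 * N * p)) * (A - p * A')| ≤ N * (3 / 2 * β * |γ|) := by
    rw [abs_mul, abs_neg, abs_of_nonneg (by positivity)]
    calc β / (2 * N * p) * |A - p * A'|
        ≤ β / (2 * N * p) * (3 * (|γ| * p * (N : ℝ) ^ 2)) := by gcongr
      _ = N * (3 / 2 * β * |γ|) := by field_simp
  have t2 : |-(α / (2 * N * p)) * (B - q * B')| ≤ N * (3 / 2 * |α| * |κ|) := by
    rw [abs_mul, abs_neg, abs_div, abs_of_pos (by positivity : 0 < 2 * (N : ℝ) * p)]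
    calc |α| / (2 * N * p) * |B - q * B'|
        ≤ |α| / (2 * N * p) * (3 * (|κ| * q * (N : ℝ) ^ 2)) := by gcongr
      _ ≤ |α| / (2 * N * p) * (3 * (|κ| * p * (N : ℝ) ^ 2)) := by gcongr
      _ = N * (3 / 2 * |α| * |κ|) := by field_simp
  have t3 : |-(α / (2 * N) * (q / p - a)) * B'| ≤ N * (1 / 2 * |α| * |q / p - a|) := by
    rw [abs_mul, abs_neg, abs_mul, abs_div, abs_of_pos (by positivity : 0 < 2 * (N : ℝ))]
    calc |α| / (2 * N) * |q / p - a| * |B'|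
        ≤ |α| / (2 * N) * |q / p - a| * (N : ℝ) ^ 2 := by gcongr
      _ = N * (1 / 2 * |α| * |q / p - a|) := by field_simp
  calc _ ≤ _ := abs_add_three _ _ _
    _ ≤ N * (3 / 2 * β * |γ|) + N * (3 / 2 * |α| * |κ|) + N * (1 / 2 * |α| * |q / p - a|) := by
      gcongr
    _ = _ := by ring

/-! ### Exponential moments and the number of magnetization values -/

lemma sum_exp_eq (x y : ℝ) :
    ∑ σ : Fin N → Bool,
        Real.exp (x * (∑ i ∈ S, spin (σ i)) + y * (∑ i ∈ Sᶜ, spin (σ i)))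
      = (2 * Real.cosh x) ^ S.card * (2 * Real.cosh y) ^ Sᶜ.card := by
  set t : Fin N → ℝ := fun i => if i ∈ S then x else y with ht
  have h1 : ∀ σ : Fin N → Bool,
      Real.exp (x * (∑ i ∈ S, spin (σ i)) + y * (∑ i ∈ Sᶜ, spin (σ i)))
        = ∏ i, Real.exp (t i * spin (σ i)) := by
    intro σ
    rw [← Real.exp_sum, ← Finset.sum_add_sum_compl S, Finset.mul_sum, Finset.mul_sum]
    congr 2
    · exact Finset.sum_congr rfl fun i hi => by simp [ht, hi]
    · exact Finset.sum_congr rfl fun i hi => by simp [ht, Finset.mem_compl.mp hi]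
  have h2 : ∀ i, ∑ b : Bool, Real.exp (t i * spin b) = 2 * Real.cosh (t i) := by
    intro i
    simp [spin, Real.cosh_eq]
    ring
  simp_rw [h1]
  have h3 := Finset.prod_univ_sum (fun _ : Fin N => (univ : Finset Bool))
    (fun i b => Real.exp (t i * spin b))
  rw [Fintype.piFinset_univ] at h3
  rw [← h3]
  simp_rw [h2]
  rw [← Finset.prod_mul_prod_compl S]
  congr 1
  · rw [Finset.prod_congr rfl (g := fun _ => 2 * Real.cosh x), Finset.prod_const]
    intro i hi; simp [ht, hi]
  · rw [Finset.prod_congr rfl (g := fun _ => 2 * Real.cosh y), Finset.prod_const]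
    intro i hi; simp [ht, Finset.mem_compl.mp hi]

lemma sum_spin_eq (T : Finset (Fin N)) :
    ∑ i ∈ T, spin (σ i) = 2 * ((T.filter fun i => σ i = true).card : ℝ) - T.card := by
  rw [Finset.card_filter, Finset.card_eq_sum_ones]
  push_cast
  rw [Finset.mul_sum, ← Finset.sum_sub_distrib]
  refine Finset.sum_congr rfl fun i _ => ?_
  cases σ i <;> norm_num [spin]

/-- The number of up-spins in each block determines the magnetizations, so at most `(N+1)²`
values occur. -/
lemma card_values_le (B : Finset (Fin N → Bool)) :
    (B.image fun σ => (m1 S σ, m2 S σ)).card ≤ (N + 1) ^ 2 := by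
  set V : ℕ × ℕ → ℝ × ℝ := fun kl =>
    ((2 / N) * (2 * (kl.1 : ℝ) - S.card), (2 / N) * (2 * (kl.2 : ℝ) - Sᶜ.card)) with hV
  have hsub : (B.image fun σ => (m1 S σ, m2 S σ)) ⊆
      ((range (N + 1)) ×ˢ (range (N + 1))).image V := by
    intro v hv
    obtain ⟨σ, _, rfl⟩ := Finset.mem_image.mp hv
    refine Finset.mem_image.mpr
      ⟨((S.filter fun i => σ i = true).card, (Sᶜ.filter fun i => σ i = true).card), ?_, ?_⟩
    · have h : ∀ T : Finset (Fin N), T.card < N + 1 := fun T => by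
        have := Finset.card_le_univ T
        simp at this
        omega
      simp only [Finset.mem_product, Finset.mem_range]
      exact ⟨h _, h _⟩
    · simp only [hV, m1, m2, sum_spin_eq]
  calc _ ≤ _ := Finset.card_le_card hsub
    _ ≤ _ := Finset.card_image_le
    _ = (N + 1) ^ 2 := by simp [sq]

/-- Total critical weight of the configurations whose magnetization vector is at distance at
least `d` from the origin in the sup norm.  Every weight `exp (N/4 * |v|²)` equals an exponentially tilted weight
with tilt `v`, so it is bounded by the sum of the tilted weights over all occurring values. -/
lemma bad_weight_le (n : ℕ) (hn : 0 < n) (hNn : N = 2 * n) (hS : S.card = n) (d : ℝ) (hd : 0 ≤ d)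
    (B : Finset (Fin N → Bool)) (hB : ∀ σ ∈ B, d ≤ |m1 S σ| ∨ d ≤ |m2 S σ|) :
    ∑ σ ∈ B, Real.exp (N / 4 * ((m1 S σ) ^ 2 + (m2 S σ) ^ 2))
      ≤ ((N : ℝ) + 1) ^ 2 * (2 ^ N * (1 - (1 - Real.exp (-(d ^ 2 / 4))) ^ 2) ^ n) := by
  set r := 1 - (1 - Real.exp (-(d ^ 2 / 4))) ^ 2 with hr
  have hSc : Sᶜ.card = n := by rw [Finset.card_compl, Fintype.card_fin, hS]; omega
  have hn' : (n : ℝ) ≠ 0 := by positivity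
  have hNr : (N : ℝ) = 2 * n := by rw [hNn]; push_cast; ring
  have hm1 : ∀ σ, ∑ i ∈ S, spin (σ i) = n * m1 S σ := by
    intro σ; unfold m1; rw [hNr]; field_simp
  have hm2 : ∀ σ, ∑ i ∈ Sᶜ, spin (σ i) = n * m2 S σ := by
    intro σ; unfold m2; rw [hNr]; field_simp
  set V := B.image fun σ => (m1 S σ, m2 S σ) with hVdef
  set W : ℝ × ℝ → (Fin N → Bool) → ℝ := fun v σ =>
    Real.exp (-(n / 2 * (v.1 ^ 2 + v.2 ^ 2))) *
      Real.exp (v.1 * (∑ i ∈ S, spin (σ i)) + v.2 * (∑ i ∈ Sᶜ, spin (σ i))) with hW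
  have hW0 : ∀ v σ, 0 ≤ W v σ := fun v σ => by simp only [hW]; positivity
  have hle : ∀ σ ∈ B, Real.exp (N / 4 * ((m1 S σ) ^ 2 + (m2 S σ) ^ 2)) ≤ ∑ v ∈ V, W v σ := by
    intro σ hσ
    have hmem : (m1 S σ, m2 S σ) ∈ V := Finset.mem_image_of_mem (fun σ => (m1 S σ, m2 S σ)) hσ
    refine le_trans (le_of_eq ?_) (Finset.single_le_sum (fun v _ => hW0 v σ) hmem)
    simp only [hW]
    rw [← Real.exp_add, hm1, hm2, hNr]
    congr 1
    ring
  have hV : ∀ v ∈ V, ∑ σ, W v σ ≤ 2 ^ N * r ^ n := by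
    intro v hv
    obtain ⟨σ, hσ, rfl⟩ := Finset.mem_image.mp hv
    have hb := hB σ hσ
    set x := m1 S σ
    set y := m2 S σ
    have hprod : ∑ σ', W (x, y) σ' = 2 ^ N *
        ((Real.cosh x * Real.exp (-(x ^ 2 / 2))) * (Real.cosh y * Real.exp (-(y ^ 2 / 2)))) ^ n := by
      simp only [hW]
      rw [← Finset.mul_sum, sum_exp_eq, hS, hSc, hNn]
      have : Real.exp (-(n / 2 * (x ^ 2 + y ^ 2)))
          = Real.exp (-(x ^ 2 / 2)) ^ n * Real.exp (-(y ^ 2 / 2)) ^ n := by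
        rw [← Real.exp_nat_mul, ← Real.exp_nat_mul, ← Real.exp_add]
        congr 1; ring
      rw [this]
      simp only [mul_pow, pow_mul]
      have h4 : ((2 : ℝ) ^ 2) ^ n = 2 ^ n * 2 ^ n := by rw [← mul_pow]; norm_num
      rw [h4]
      ring
    rw [hprod]
    have hx0 : 0 ≤ Real.cosh x * Real.exp (-(x ^ 2 / 2)) :=
      mul_nonneg (Real.cosh_pos x).le (Real.exp_pos _).le
    have hy0 : 0 ≤ Real.cosh y * Real.exp (-(y ^ 2 / 2)) :=
      mul_nonneg (Real.cosh_pos y).le (Real.exp_pos _).le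
    have hx1 := cosh_mul_exp_le_one x
    have hy1 := cosh_mul_exp_le_one y
    have : (Real.cosh x * Real.exp (-(x ^ 2 / 2))) * (Real.cosh y * Real.exp (-(y ^ 2 / 2))) ≤ r := by
      rcases hb with h | h
      · exact (mul_le_of_le_one_right hx0 hy1).trans (cosh_mul_exp_le d x hd h)
      · exact (mul_le_of_le_one_left hy0 hx1).trans (cosh_mul_exp_le d y hd h)
    gcongr
  have hr0 : 0 ≤ r := by
    have h0 := Real.exp_pos (-(d ^ 2 / 4))
    have h1 : Real.exp (-(d ^ 2 / 4)) ≤ 1 := Real.exp_le_one_iff.mpr (by nlinarith)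
    rw [hr]; nlinarith
  calc ∑ σ ∈ B, Real.exp (N / 4 * ((m1 S σ) ^ 2 + (m2 S σ) ^ 2))
      ≤ ∑ σ ∈ B, ∑ v ∈ V, W v σ := Finset.sum_le_sum hle
    _ ≤ ∑ σ, ∑ v ∈ V, W v σ :=
        Finset.sum_le_univ_sum_of_nonneg fun σ => Finset.sum_nonneg fun v _ => hW0 v σ
    _ = ∑ v ∈ V, ∑ σ, W v σ := Finset.sum_comm
    _ ≤ V.card • (2 ^ N * r ^ n) := Finset.sum_le_card_nsmul _ _ _ hV
    _ ≤ ((N : ℝ) + 1) ^ 2 * (2 ^ N * r ^ n) := by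
        rw [nsmul_eq_mul]
        have : (V.card : ℝ) ≤ ((N : ℝ) + 1) ^ 2 := by exact_mod_cast card_values_le S B
        gcongr

end Block

/-! ### Concentration of Gibbs averages -/

/-- A Gibbs average is close to `c` if the observable is within `e` of `c` off a set `B` of small
relative weight. -/
lemma gibbsAvg_sub_le {N : ℕ} (H g : (Fin N → Bool) → ℝ) (B : Finset (Fin N → Bool))
    (c e M R : ℝ) (he : 0 ≤ e) (hM : ∀ σ, |g σ - c| ≤ M) (hg : ∀ σ, σ ∉ B → |g σ - c| ≤ e)
    (hR : ∑ σ ∈ B, Real.exp (-H σ) ≤ R * ∑ σ, Real.exp (-H σ)) :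
    |gibbsAvg H g - c| ≤ e + M * R := by
  have hZ : 0 < ∑ σ, Real.exp (-H σ) :=
    Finset.sum_pos (fun σ _ => Real.exp_pos _) Finset.univ_nonempty
  have hM0 : 0 ≤ M := (abs_nonneg _).trans (hM fun _ => true)
  have hrew : gibbsAvg H g - c = (∑ σ, Real.exp (-H σ) * (g σ - c)) / ∑ σ, Real.exp (-H σ) := by
    unfold gibbsAvg
    simp_rw [mul_sub]
    rw [Finset.sum_sub_distrib, ← Finset.sum_mul]
    field_simp
  rw [hrew, abs_div, abs_of_pos hZ, div_le_iff₀ hZ]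
  calc |∑ σ, Real.exp (-H σ) * (g σ - c)|
      ≤ ∑ σ, |Real.exp (-H σ) * (g σ - c)| := Finset.abs_sum_le_sum_abs _ _
    _ ≤ ∑ σ, (e * Real.exp (-H σ) + M * (if σ ∈ B then Real.exp (-H σ) else 0)) := by
        refine Finset.sum_le_sum fun σ _ => ?_
        rw [abs_mul, abs_of_pos (Real.exp_pos _)]
        have hx := Real.exp_pos (-H σ)
        by_cases hσ : σ ∈ B
        · rw [if_pos hσ]
          nlinarith [mul_le_mul_of_nonneg_left (hM σ) hx.le, mul_nonneg he hx.le]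
        · rw [if_neg hσ]
          nlinarith [mul_le_mul_of_nonneg_left (hg σ hσ) hx.le]
    _ = e * (∑ σ, Real.exp (-H σ)) + M * ∑ σ ∈ B, Real.exp (-H σ) := by
        rw [Finset.sum_add_distrib, ← Finset.mul_sum, ← Finset.mul_sum]
        simp
    _ ≤ e * (∑ σ, Real.exp (-H σ)) + M * (R * ∑ σ, Real.exp (-H σ)) := by gcongr
    _ = _ := by ring

/-- The polynomial number of magnetization values and an `exp (o(n))` distortion do not spoil the
exponential decay `r ^ n`. -/
lemma tendsto_error (r : ℝ) (hr0 : 0 ≤ r) (hr1 : r < 1) :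
    ∃ c > 0, Tendsto (fun n : ℕ => (2 * (n : ℝ) + 1) ^ 2 * (r * Real.exp c) ^ n) atTop (nhds 0) := by
  have hcont : Tendsto (fun c : ℝ => r * Real.exp c) (nhds 0) (nhds r) := by
    have : Continuous fun c : ℝ => r * Real.exp c := by fun_prop
    simpa using this.tendsto 0
  obtain ⟨c, hc, hc0⟩ := ((hcont.eventually (gt_mem_nhds hr1)).filter_mono
    nhdsWithin_le_nhds |>.and self_mem_nhdsWithin : ∀ᶠ c in nhdsWithin (0 : ℝ) (Set.Ioi 0), _).exists
  refine ⟨c, hc0, ?_⟩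
  have hs0 : 0 ≤ r * Real.exp c := mul_nonneg hr0 (Real.exp_pos _).le
  set s := r * Real.exp c
  have habs : |s| < 1 := by rw [abs_of_nonneg hs0]; exact hc
  have h2 := tendsto_pow_const_mul_const_pow_of_abs_lt_one 2 habs
  have h1 := tendsto_pow_const_mul_const_pow_of_abs_lt_one 1 habs
  have h0 := tendsto_pow_const_mul_const_pow_of_abs_lt_one 0 habs
  have := ((h2.const_mul 4).add (h1.const_mul 4)).add h0
  simp only [mul_zero, add_zero] at this
  refine this.congr fun n => ?_
  ring

/-- high-temperature phase `β + |αa| ≤ 2`: on `E_N^*` the group opinion vector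
under the diluted Gibbs measure converges weakly to the Dirac measure at `(0,0)`. -/
theorem diluted_weak_limit_subcritical
    (β α : ℝ) (hβ : 0 < β) (p q γ κ : ℕ → ℝ) (a : ℝ)
    (S : ∀ N : ℕ, Finset (Fin N)) (hS : ∀ N, Even N → (S N).card = N / 2)
    (hq0 : ∀ N, Even N → 0 < q N) (hqp : ∀ N, Even N → q N ≤ p N)
    (hp1 : ∀ N, Even N → p N ≤ 1)
    (hNp : Filter.Tendsto (fun N : ℕ => (N : ℝ) * p N) evenAtTop Filter.atTop)
    (ha : Filter.Tendsto (fun N : ℕ => q N / p N) evenAtTop (nhds a))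
    (hαa : |α| * a ≤ β)
    (hγ : Filter.Tendsto γ evenAtTop (nhds 0)) (hκ : Filter.Tendsto κ evenAtTop (nhds 0))
    (ε δ : ∀ N : ℕ, Fin N → Fin N → ℝ)
    (hε : ∀ N i j, ε N i j = 0 ∨ ε N i j = 1) (hδ : ∀ N i j, δ N i j = 0 ∨ δ N i j = 1)
    (hE : ∀ N, Even N → Estar (S N) (γ N) (κ N) (p N) (q N) (ε N) (δ N))
    (ha0 : 0 ≤ a) (ha1 : a ≤ 1)
    (hcrit : β + |α * a| ≤ 2) :
    ∀ f : ℝ × ℝ → ℝ, IsBddCont f →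
      Filter.Tendsto
        (fun N : ℕ => gibbsAvg (Hdil (S N) α β (p N) (ε N) (δ N))
          fun σ => f (m1 (S N) σ, m2 (S N) σ))
        evenAtTop (nhds (f (0, 0))) := by
  intro f ⟨hf, M, hM⟩
  set η : ℕ → ℝ := fun N =>
    3 / 2 * β * |γ N| + 3 / 2 * |α| * |κ N| + 1 / 2 * |α| * |q N / p N - a| with hη
  have hηlim : Tendsto η evenAtTop (nhds 0) := by
    have h3 : Tendsto (fun N => q N / p N - a) evenAtTop (nhds 0) := by
      simpa using ha.sub_const a
    have := ((hγ.abs.const_mul (3 / 2 * β)).add (hκ.abs.const_mul (3 / 2 * |α|))).add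
      (h3.abs.const_mul (1 / 2 * |α|))
    simp only [abs_zero, mul_zero, add_zero] at this
    exact this
  rw [Metric.tendsto_nhds]
  intro e he
  -- a square neighbourhood of the origin on which `f` varies by less than `e / 2`
  obtain ⟨d, hd, hfd⟩ := Metric.continuousAt_iff.mp (hf.continuousAt (x := (0, 0))) (e / 2)
    (by positivity)
  set r := 1 - (1 - Real.exp (-(d ^ 2 / 4))) ^ 2 with hr
  have hexp1 : Real.exp (-(d ^ 2 / 4)) < 1 := by
    rw [Real.exp_lt_one_iff]; nlinarith [sq_pos_of_pos hd]
  have hexp0 := Real.exp_pos (-(d ^ 2 / 4))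
  have hr0 : 0 ≤ r := by rw [hr]; nlinarith
  have hr1 : r < 1 := by rw [hr]; nlinarith [sq_pos_of_pos (sub_pos.mpr hexp1)]
  obtain ⟨c, hc, hlim⟩ := tendsto_error r hr0 hr1
  have hlim' : Tendsto (fun N : ℕ => 2 * M *
      ((2 * ((N / 2 : ℕ) : ℝ) + 1) ^ 2 * (r * Real.exp c) ^ (N / 2))) evenAtTop (nhds 0) := by
    have hdiv : Tendsto (fun N : ℕ => N / 2) evenAtTop atTop :=
      (Nat.tendsto_div_const_atTop (by norm_num : (2 : ℕ) ≠ 0)).mono_left inf_le_left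
    simpa using (hlim.comp hdiv).const_mul (2 * M)
  have heven : ∀ᶠ N in evenAtTop, Even N :=
    (Filter.eventually_principal.mpr fun _ h => h).filter_mono inf_le_right
  have hpos : ∀ᶠ N in evenAtTop, 0 < N := (eventually_gt_atTop 0).filter_mono inf_le_left
  filter_upwards [heven, hpos, hηlim.eventually (gt_mem_nhds (by positivity : 0 < c / 4)),
    hlim'.eventually (gt_mem_nhds (by positivity : 0 < e / 2))] with N hev hN hηN hsmall
  obtain ⟨n, hn⟩ := hev.exists_two_nsmul
  rw [smul_eq_mul] at hn
  have hn2 : N / 2 = n := by omega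
  have hn0 : 0 < n := by omega
  rw [hn2] at hsmall
  have hcard : (S N).card = n := by rw [hS N hev, hn2]
  have hlam : |α * a| ≤ β := by rw [abs_mul, abs_of_nonneg ha0]; exact hαa
  set H := Hdil (S N) α β (p N) (ε N) (δ N) with hH
  have hclose : ∀ σ, |H σ - Htilde (S N) (α * a) β σ| ≤ N * η N := fun σ =>
    Hdil_close (S N) σ hN α β (γ N) (κ N) (p N) (q N) a hβ.le (hq0 N hev) (hqp N hev) _ _
      (hE N hev)
  set B : Finset (Fin N → Bool) :=
    univ.filter fun σ => d ≤ |m1 (S N) σ| ∨ d ≤ |m2 (S N) σ| with hB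
  have hnum : ∑ σ ∈ B, Real.exp (-H σ)
      ≤ Real.exp (N * η N) * (((N : ℝ) + 1) ^ 2 * (2 ^ N * r ^ n)) := by
    calc ∑ σ ∈ B, Real.exp (-H σ)
        ≤ ∑ σ ∈ B, Real.exp (N * η N) *
            Real.exp (N / 4 * ((m1 (S N) σ) ^ 2 + (m2 (S N) σ) ^ 2)) := by
          refine Finset.sum_le_sum fun σ _ => ?_
          rw [← Real.exp_add]
          apply Real.exp_le_exp.mpr
          linarith [(abs_le.mp (hclose σ)).1, neg_Htilde_le (S N) σ hN (α * a) β hcrit]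
      _ ≤ _ := by
          rw [← Finset.mul_sum]
          gcongr
          exact bad_weight_le (S N) n hn0 hn hcard d hd.le B fun σ hσ =>
            (Finset.mem_filter.mp hσ).2
  have hden : Real.exp (-(N * η N)) * 2 ^ N ≤ ∑ σ, Real.exp (-H σ) := by
    have h : ∀ σ ∈ (univ : Finset (Fin N → Bool)), Real.exp (-(N * η N)) ≤ Real.exp (-H σ) := by
      intro σ _
      apply Real.exp_le_exp.mpr
      linarith [(abs_le.mp (hclose σ)).2, neg_Htilde_nonneg (S N) σ hN (α * a) β hlam]
    have := Finset.card_nsmul_le_sum _ _ _ h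
    simp only [Finset.card_univ, Fintype.card_fun, Fintype.card_bool, Fintype.card_fin,
      nsmul_eq_mul, Nat.cast_pow, Nat.cast_ofNat] at this
    linarith
  have hratio : ∑ σ ∈ B, Real.exp (-H σ)
      ≤ ((2 * (n : ℝ) + 1) ^ 2 * (r * Real.exp c) ^ n) * ∑ σ, Real.exp (-H σ) := by
    have hNr : (N : ℝ) = 2 * n := by rw [hn]; push_cast; ring
    -- `2 N η ≤ n c`, since `N = 2 n` and `η < c / 4`
    have hee : Real.exp (N * η N) ≤ Real.exp (n * c) * Real.exp (-(N * η N)) := by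
      rw [← Real.exp_add]
      apply Real.exp_le_exp.mpr
      have hnpos : (0 : ℝ) < n := by exact_mod_cast hn0
      rw [hNr]
      nlinarith
    calc ∑ σ ∈ B, Real.exp (-H σ)
        ≤ Real.exp (N * η N) * (((N : ℝ) + 1) ^ 2 * (2 ^ N * r ^ n)) := hnum
      _ ≤ (Real.exp (n * c) * Real.exp (-(N * η N))) *
            (((N : ℝ) + 1) ^ 2 * (2 ^ N * r ^ n)) := by gcongr
      _ = ((2 * (n : ℝ) + 1) ^ 2 * (r * Real.exp c) ^ n) * (Real.exp (-(N * η N)) * 2 ^ N) := by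
          rw [mul_pow, ← Real.exp_nat_mul, ← hNr]
          ring
      _ ≤ _ := by gcongr
  have hfin := gibbsAvg_sub_le H (fun σ => f (m1 (S N) σ, m2 (S N) σ)) B (f (0, 0)) (e / 2)
    (2 * M) _ (by positivity) (fun σ => ?_) (fun σ hσ => ?_) hratio
  · rw [Real.dist_eq]
    linarith
  · refine (abs_sub _ _).trans ?_
    linarith [hM (m1 (S N) σ, m2 (S N) σ), hM (0, 0)]
  · have hσ' : |m1 (S N) σ| < d ∧ |m2 (S N) σ| < d := by
      simpa [hB, not_or] using hσ
    have := @hfd (m1 (S N) σ, m2 (S N) σ) (by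
      rw [Prod.dist_eq]
      simpa [Real.dist_eq] using hσ')
    rw [Real.dist_eq] at this
    exact this.le
end
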